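/- For any integers m ≥ 1, n₁,…,n_m ≥ 1 and k ≥ ℓ ≥ 1, the ℓ-party discrepancy of the XOR of m independent instances of set disjointness satisfies disc_ℓ(⊕_{i=1}^m DISJ_{n_i,k}, ⊗_{i=1}^m σ_{n_i,k,ℓ}) ≤ (2^ℓ − 1)^{m/2} · (C(k,1) + C(k,2) + ⋯ + C(k,ℓ))^{m/2} / √(n₁·n₂·⋯·n_m). -/

import Mathlib

open Finset

/-- Set disjointness: `DISJ_{n,k}(X) = 1` iff `X` has no all-ones row. -/
def DISJ (n k : ℕ) (X : Fin n → Fin k → Bool) : Bool :=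
  decide (∀ i, ∃ j, X i j = false)

/-- Hamming weight of `u ∈ {0,1}^k`. -/
def wt {k : ℕ} (u : Fin k → Bool) : ℕ :=
  (Finset.univ.filter (fun j => u j = true)).card

/-- The weight, under the uniform distribution on
`{u ∈ {0,1}^k : k−ℓ ≤ |u| ≤ k−1}`, of a row `u`. -/
noncomputable def rowWtL (k ℓ : ℕ) (u : Fin k → Bool) : ℝ :=
  if k - ℓ ≤ wt u ∧ wt u ≤ k - 1 then
    (1 : ℝ) /
      (Finset.univ.filter (fun v : Fin k → Bool => k - ℓ ≤ wt v ∧ wt v ≤ k - 1)).card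
  else 0

/-- `σ⁰_{n,k,ℓ}`: each of the `n` rows is independent and uniform on
`{u ∈ {0,1}^k : k−ℓ ≤ |u| ≤ k−1}`. -/
noncomputable def sigma0L (n k ℓ : ℕ) (X : Fin n → Fin k → Bool) : ℝ :=
  ∏ i : Fin n, rowWtL k ℓ (X i)

/-- `σ¹_{n,k,ℓ}`: a uniformly random row is set to `1^k` and the remaining rows are
independent and uniform on `{u ∈ {0,1}^k : k−ℓ ≤ |u| ≤ k−1}`. -/
noncomputable def sigma1L (n k ℓ : ℕ) (X : Fin n → Fin k → Bool) : ℝ :=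
  (1 / (n : ℝ)) *
    ∑ i₀ : Fin n,
      if ∀ j, X i₀ j = true then ∏ i ∈ Finset.univ.erase i₀, rowWtL k ℓ (X i) else 0

/-- `σ_{n,k,ℓ} = ½σ⁰_{n,k,ℓ} + ½σ¹_{n,k,ℓ}`. -/
noncomputable def sigmaL (n k ℓ : ℕ) (X : Fin n → Fin k → Bool) : ℝ :=
  (sigma0L n k ℓ X + sigma1L n k ℓ X) / 2

/-- `χ` is an `S`-cylinder intersection on tuples `(X₁,…,X_m)` of Boolean matrices
`X_i ∈ {0,1}^{n_i×k}`: a product over `j ∈ S` of `{0,1}`-valued functions `φ j`,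
where `φ j` does not depend on the `j`-th columns of `X₁,…,X_m`. -/
def IsCylinderT {m : ℕ} (nn : Fin m → ℕ) (k : ℕ) (S : Finset (Fin k))
    (χ : (∀ i, Fin (nn i) → Fin k → Bool) → ℝ) : Prop :=
  ∃ φ : Fin k → ((∀ i, Fin (nn i) → Fin k → Bool) → ℝ),
    (∀ j ∈ S, ∀ X, φ j X = 0 ∨ φ j X = 1) ∧
    (∀ j ∈ S, ∀ X Y, (∀ i i' j', j' ≠ j → X i i' j' = Y i i' j') → φ j X = φ j Y) ∧
    (∀ X, χ X = ∏ j ∈ S, φ j X)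

/-- The `ℓ`-discrepancy (maximum over `S ⊆ {1,…,k}` with `|S| ≤ ℓ` of the
`S`-discrepancy) of a Boolean function `F` on tuples of matrices, w.r.t. `μ`. -/
noncomputable def discTL {m : ℕ} (nn : Fin m → ℕ) (k ℓ : ℕ)
    (F : (∀ i, Fin (nn i) → Fin k → Bool) → Bool)
    (μ : (∀ i, Fin (nn i) → Fin k → Bool) → ℝ) : ℝ :=
  sSup {t : ℝ | ∃ S : Finset (Fin k), ∃ χ : (∀ i, Fin (nn i) → Fin k → Bool) → ℝ,
    S.card ≤ ℓ ∧ IsCylinderT nn k S χ ∧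
    t = |∑ X : ∀ i, Fin (nn i) → Fin k → Bool,
          (if F X then (-1 : ℝ) else 1) * μ X * χ X|}

/-!
The signed density of a single instance is half of `σ¹ - σ⁰`: the average over the rows of the
product density with that row planted as all-ones, minus the product density. The correlation of a
tensor product of such blocks with an `S`-cylinder is bounded by induction on `#S`. For `j ∈ S` the
cylinder is `φ * ψ`, where `φ` ignores column `j`; Cauchy–Schwarz removes `φ` and doubles column
`j`. In a row whose two copies of the bit differ, the other columns are uniform on the rows both of
whose extensions are allowed, and the row can be planted in one of the copies only. These rows form
two smaller blocks with `S \ {j}` in place of `S`. The remaining rows contribute nonnegative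
weights, apart from a diagonal term in which the same row is planted in both copies.

The number of rows of the smaller blocks is random, so planting and not planting no longer balance.
The induction therefore concerns blocks with an arbitrary planting rate `t` and bounds them by a
standard deviation, with variance constant `C`, plus the bias `|t * n - 1|`. The recursion for `C`
is solved by a closed form below `4 * (2 ^ #S - 1) * #U`, where `U` is the set of allowed rows.
-/

namespace XorDisjointness

section MarkedProducts

variable {κ : Type*} [Fintype κ] [DecidableEq κ]

/-- The derivative of `∏ i, r i` in the direction `d`: each row in turn has its factor `r i`
replaced by the mark `d i`. -/
def markedProd (d r : κ → ℝ) : ℝ :=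
  ∑ i, ∏ j, if j = i then d j else r j

/-- The density of a block of rows, where row `i` contributes `r i` when it is drawn from the row
distribution and `d i` when it is planted. For `t = 1 / card κ` this is `σ¹ - σ⁰`; Cauchy–Schwarz
produces other values of `t`. -/
def signedBlock (t : ℝ) (d r : κ → ℝ) : ℝ :=
  t * markedProd d r - ∏ i, r i

lemma markedProd_mul (c d r : κ → ℝ) :
    markedProd (fun i ↦ c i * d i) (fun i ↦ c i * r i) = (∏ i, c i) * markedProd d r := by
  simp only [markedProd, mul_sum, ← prod_mul_distrib, mul_ite]

lemma markedProd_mul_right (c d r : κ → ℝ) :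
    markedProd (fun i ↦ d i * c i) (fun i ↦ r i * c i) = (∏ i, c i) * markedProd d r := by
  simpa only [mul_comm] using markedProd_mul c d r

lemma markedProd_one (d : κ → ℝ) : markedProd d (fun _ ↦ 1) = ∑ i, d i := by
  simp [markedProd]

lemma markedProd_eq_zero {d r : κ → ℝ} (h : ∀ i, d i = 0) : markedProd d r = 0 :=
  sum_eq_zero fun i _ ↦ prod_eq_zero (mem_univ i) (by rw [if_pos rfl, h])

lemma markedProd_nonneg {d r : κ → ℝ} (hd : ∀ i, 0 ≤ d i) (hr : ∀ i, 0 ≤ r i) :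
    0 ≤ markedProd d r :=
  sum_nonneg fun _ _ ↦ prod_nonneg fun j _ ↦ by split_ifs <;> simp only [hd, hr]

lemma markedProd_eq_sum_mul_prod_erase (d r : κ → ℝ) :
    markedProd d r = ∑ i, d i * ∏ j ∈ univ.erase i, r j := by
  refine sum_congr rfl fun i _ ↦ ?_
  rw [← mul_prod_erase univ _ (mem_univ i), if_pos rfl]
  exact congrArg _ (prod_congr rfl fun j hj ↦ if_neg (ne_of_mem_erase hj))

lemma sum_markedProd {γ : Type*} [Fintype γ] (d r : κ → γ → ℝ) :
    ∑ x : κ → γ, markedProd (fun i ↦ d i (x i)) (fun i ↦ r i (x i)) =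
      markedProd (fun i ↦ ∑ c, d i c) (fun i ↦ ∑ c, r i c) := by
  simp only [markedProd]
  rw [sum_comm]
  refine sum_congr rfl fun i _ ↦ ?_
  rw [← Fintype.prod_sum fun j c ↦ if j = i then d j c else r j c]
  exact prod_congr rfl fun j _ ↦ by split_ifs <;> rfl

lemma markedProd_fiberwise {L : Type*} [Fintype L] [DecidableEq L] (tag : κ → L) (d r : κ → ℝ) :
    markedProd d r =
      markedProd (fun l ↦ markedProd (fun i : {i // tag i = l} ↦ d i) (fun i ↦ r i))
        (fun l ↦ ∏ i : {i // tag i = l}, r i) := by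
  simp only [markedProd]
  rw [← Fintype.sum_fiberwise tag]
  refine sum_congr rfl fun l _ ↦ ?_
  have split (i : {i // tag i = l}) :
      (∏ j, if j = (i : κ) then d j else r j) =
        (∏ j : {j // tag j = l}, if j = i then d j else r j) *
          ∏ l' ∈ univ.erase l, ∏ j : {j // tag j = l'}, r j := by
    rw [← Fintype.prod_fiberwise tag, ← mul_prod_erase univ _ (mem_univ l)]
    congr 1
    · simp only [Subtype.ext_iff]
    · refine prod_congr rfl fun l' hl' ↦ prod_congr rfl fun j _ ↦ if_neg ?_
      rintro hji
      exact ne_of_mem_erase hl' (by rw [← j.2, hji, i.2])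
  rw [sum_congr rfl fun i _ ↦ split i, ← sum_mul, ← mul_prod_erase univ _ (mem_univ l), if_pos rfl]
  exact congrArg _ (prod_congr rfl fun l' hl' ↦ (if_neg (ne_of_mem_erase hl')).symm)

lemma markedProd_mul_markedProd {d r d' r' : κ → ℝ} (h : ∀ i, d i * r' i = 0) :
    markedProd d r * markedProd d' r' =
      markedProd (fun i ↦ d i * d' i) (fun i ↦ r i * r' i) := by
  simp only [markedProd, sum_mul_sum, ← prod_mul_distrib]
  refine sum_congr rfl fun i _ ↦ ?_
  rw [sum_eq_single i]
  · exact prod_congr rfl fun j _ ↦ by split_ifs <;> rfl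
  · intro i' _ hi'
    exact prod_eq_zero (mem_univ i) (by rw [if_pos rfl, if_neg hi'.symm, h])
  · simp

lemma signedBlock_mul (t : ℝ) (c d r : κ → ℝ) :
    signedBlock t (fun i ↦ c i * d i) (fun i ↦ c i * r i) = (∏ i, c i) * signedBlock t d r := by
  simp only [signedBlock, markedProd_mul, prod_mul_distrib]
  ring

lemma signedBlock_const_mul (t : ℝ) {c : ℝ} (hc : c ≠ 0) (d r : κ → ℝ) :
    signedBlock t d (fun i ↦ c * r i) = c ^ Fintype.card κ * signedBlock (t / c) d r := by
  have marks : markedProd (fun i ↦ c * d i) (fun i ↦ c * r i) =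
      c ^ Fintype.card κ * markedProd d r := by
    simpa using markedProd_mul (fun _ ↦ c) d r
  have scale : markedProd (fun i ↦ c * d i) (fun i ↦ c * r i) =
      c * markedProd d (fun i ↦ c * r i) := by
    simp only [markedProd_eq_sum_mul_prod_erase, mul_sum, mul_assoc]
  have key := scale.symm.trans marks
  simp only [signedBlock, prod_mul_distrib, prod_const, card_univ]
  field_simp
  linear_combination t * key

lemma sum_signedBlock {γ : Type*} [Fintype γ] (t : ℝ) (d r : κ → γ → ℝ) :
    ∑ x : κ → γ, signedBlock t (fun i ↦ d i (x i)) (fun i ↦ r i (x i)) =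
      signedBlock t (fun i ↦ ∑ c, d i c) (fun i ↦ ∑ c, r i c) := by
  simp only [signedBlock, sum_sub_distrib, ← mul_sum, sum_markedProd, Fintype.prod_sum]

lemma prod_option_bool_fiberwise {ι : Type*} [Fintype ι] (tag : ι → Option Bool) (r : ι → ℝ) :
    ∏ i, r i = (∏ i : {i // tag i = none}, r i) *
      ((∏ i : {i // tag i = some true}, r i) * ∏ i : {i // tag i = some false}, r i) := by
  rw [← Fintype.prod_fiberwise tag, Fintype.prod_option, Fintype.prod_bool]

lemma markedProd_option_bool_fiberwise (tag : κ → Option Bool) (d r : κ → ℝ) :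
    markedProd d r =
      markedProd (fun i : {i // tag i = none} ↦ d i) (fun i ↦ r i) *
          (∏ i : {i // tag i = some true}, r i) * (∏ i : {i // tag i = some false}, r i) +
        (∏ i : {i // tag i = none}, r i) *
          markedProd (fun i : {i // tag i = some true} ↦ d i) (fun i ↦ r i) *
          (∏ i : {i // tag i = some false}, r i) +
        (∏ i : {i // tag i = none}, r i) * (∏ i : {i // tag i = some true}, r i) *
          markedProd (fun i : {i // tag i = some false} ↦ d i) (fun i ↦ r i) := by
  rw [markedProd_fiberwise tag, markedProd]
  simp only [Fintype.sum_option, Fintype.sum_bool, Fintype.prod_option, Fintype.prod_bool,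
    reduceCtorEq, Option.some.injEq, Bool.false_eq_true, Bool.true_eq_false, if_true, if_false]
  ring

/- The copies `(d, r)` and `(d', r')` can only be planted together in rows tagged `none`, and only
in the same one; this gives the second term. -/
lemma signedBlock_mul_signedBlock (t : ℝ) {d r d' r' : κ → ℝ} (tag : κ → Option Bool)
    (h_true : ∀ i, tag i = some true → d' i = 0) (h_false : ∀ i, tag i = some false → d i = 0)
    (h_none : ∀ i, tag i = none → d i * r' i = 0) (h_none' : ∀ i, tag i = none → r i * d' i = 0) :
    signedBlock t d r * signedBlock t d' r' =
      (∏ i : {i // tag i = none}, r i * r' i) *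
          signedBlock t (fun i : {i // tag i = some true} ↦ d i * r' i) (fun i ↦ r i * r' i) *
          signedBlock t (fun i : {i // tag i = some false} ↦ r i * d' i) (fun i ↦ r i * r' i) +
        t ^ 2 * markedProd (fun i ↦ d i * d' i) (fun i ↦ r i * r' i) := by
  have left (o : Option Bool) := markedProd_mul_right (κ := {i // tag i = o})
    (fun i ↦ r' i) (fun i ↦ d i) fun i ↦ r i
  have right (o : Option Bool) := markedProd_mul (κ := {i // tag i = o})
    (fun i ↦ r i) (fun i ↦ d' i) fun i ↦ r' i
  have none_left := (left none).symm.trans (markedProd_eq_zero fun i ↦ h_none i i.2)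
  have none_right := (right none).symm.trans (markedProd_eq_zero fun i ↦ h_none' i i.2)
  have none_both := markedProd_mul_markedProd (κ := {i // tag i = none}) (d := fun i ↦ d i)
    (r := fun i ↦ r i) (d' := fun i ↦ d' i) (r' := fun i ↦ r' i) fun i ↦ h_none i i.2
  simp only [signedBlock, left, right]
  rw [markedProd_option_bool_fiberwise tag d r, markedProd_option_bool_fiberwise tag d' r',
    markedProd_option_bool_fiberwise tag (fun i ↦ d i * d' i),
    prod_option_bool_fiberwise tag r, prod_option_bool_fiberwise tag r', ← none_both,
    markedProd_eq_zero (d := fun i : {i // tag i = some false} ↦ d i) fun i ↦ h_false i i.2,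
    markedProd_eq_zero (d := fun i : {i // tag i = some true} ↦ d' i) fun i ↦ h_true i i.2,
    markedProd_eq_zero (d := fun i : {i // tag i = some true} ↦ d i * d' i)
      fun i ↦ by rw [h_true i i.2, mul_zero],
    markedProd_eq_zero (d := fun i : {i // tag i = some false} ↦ d i * d' i)
      fun i ↦ by rw [h_false i i.2, zero_mul]]
  simp only [prod_mul_distrib]
  generalize markedProd (fun i : {i // tag i = some false} ↦ d' i) (fun i ↦ r' i) = D'f
  generalize markedProd (fun i : {i // tag i = some true} ↦ d i) (fun i ↦ r i) = Dt
  generalize ∏ i : {i // tag i = some true}, r i = Pt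
  generalize ∏ i : {i // tag i = some false}, r i = Pf
  generalize ∏ i : {i // tag i = some true}, r' i = P't
  generalize ∏ i : {i // tag i = some false}, r' i = P'f
  linear_combination (t ^ 2 * Pt * Pf * P't * D'f - t * Pt * Pf * P't * P'f) * none_left +
    (t ^ 2 * Dt * Pf * P't * P'f - t * Pt * Pf * P't * P'f) * none_right

end MarkedProducts

section Moments

variable {κ γ : Type*} [Fintype κ] [DecidableEq κ] [Fintype γ] {p : γ → ℝ}

lemma sum_prod_eq_one (hp_sum : ∑ c, p c = 1) : ∑ z : κ → γ, ∏ i, p (z i) = 1 := by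
  rw [← Fintype.prod_sum fun _ : κ ↦ p]
  simp [hp_sum]

lemma sum_prod_mul_sum (hp_sum : ∑ c, p c = 1) (h : γ → ℝ) :
    ∑ z : κ → γ, (∏ i, p (z i)) * ∑ i, h (z i) = Fintype.card κ * ∑ c, p c * h c := by
  calc ∑ z : κ → γ, (∏ i, p (z i)) * ∑ i, h (z i)
      = ∑ z : κ → γ, markedProd (fun i ↦ p (z i) * h (z i)) (fun i ↦ p (z i)) :=
        sum_congr rfl fun z _ ↦ by
          simpa [markedProd_one] using
            (markedProd_mul (fun i ↦ p (z i)) (fun i ↦ h (z i)) fun _ ↦ 1).symm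
    _ = Fintype.card κ * ∑ c, p c * h c := by
        rw [sum_markedProd (fun _ : κ ↦ fun c ↦ p c * h c) (fun _ ↦ p), hp_sum, markedProd_one]
        simp

lemma sum_prod_mul_sq_sum (hp_sum : ∑ c, p c = 1) {g : γ → ℝ} (hg : ∑ c, p c * g c = 0) :
    ∑ z : κ → γ, (∏ i, p (z i)) * (∑ i, g (z i)) ^ 2 = Fintype.card κ * ∑ c, p c * g c ^ 2 := by
  have covariance (i k : κ) : ∑ z : κ → γ, (∏ j, p (z j)) * (g (z i) * g (z k)) =
      if i = k then ∑ c, p c * g c ^ 2 else 0 := by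
    have expand (z : κ → γ) : (∏ j, p (z j)) * (g (z i) * g (z k)) =
        ∏ j, p (z j) * (if j = i then g (z j) else 1) * if j = k then g (z j) else 1 := by
      simp only [prod_mul_distrib, prod_ite_eq', mem_univ, if_true, mul_assoc]
    rw [sum_congr rfl fun z _ ↦ expand z, ← Fintype.prod_sum fun j c ↦
      p c * (if j = i then g c else 1) * if j = k then g c else 1]
    split_ifs with hik
    · subst hik
      rw [prod_eq_single_of_mem i (mem_univ i) fun j _ hj ↦ by simp [hj, hp_sum]]
      simp only [if_true, sq, mul_assoc]
    · exact prod_eq_zero (mem_univ i) (by simp [hik, hg])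
  calc ∑ z : κ → γ, (∏ i, p (z i)) * (∑ i, g (z i)) ^ 2
      = ∑ i, ∑ k, ∑ z : κ → γ, (∏ j, p (z j)) * (g (z i) * g (z k)) := by
        simp only [sq (∑ _, g _), sum_mul_sum]
        simp only [mul_sum]
        rw [sum_comm]
        exact sum_congr rfl fun i _ ↦ sum_comm
    _ = Fintype.card κ * ∑ c, p c * g c ^ 2 := by simp [covariance]

end Moments

section BlockBound

/-- The bound for the correlation of a `signedBlock` of `n` rows with a cylinder intersection:
a variance term plus the bias `t * n - 1`, which vanishes for `σ¹ - σ⁰`. -/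
noncomputable def blockBound (C n t : ℝ) : ℝ :=
  t * √(C * n) + |t * n - 1|

lemma blockBound_nonneg (C n : ℝ) {t : ℝ} (ht : 0 ≤ t) : 0 ≤ blockBound C n t := by
  unfold blockBound
  positivity

lemma blockBound_mono {C C' n t : ℝ} (hC : C ≤ C') (hn : 0 ≤ n) (ht : 0 ≤ t) :
    blockBound C n t ≤ blockBound C' n t := by
  unfold blockBound
  gcongr

lemma sum_mul_add_sq_le {ι : Type*} [Fintype ι] {w : ι → ℝ} (hw : ∀ i, 0 ≤ w i)
    (hw_sum : ∑ i, w i = 1) {G : ι → ℝ} {u v : ℝ} (hu : 0 ≤ u) (hv : 0 ≤ v)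
    (hG : ∑ i, w i * G i ^ 2 ≤ v ^ 2) : ∑ i, w i * (G i + u) ^ 2 ≤ (v + u) ^ 2 := by
  have mean_le : ∑ i, w i * G i ≤ v := by
    refine le_of_sq_le_sq ?_ hv
    exact (Real.pow_arith_mean_le_arith_mean_pow_of_even univ w G (fun i _ ↦ hw i) hw_sum
      even_two).trans hG
  calc ∑ i, w i * (G i + u) ^ 2
      = ∑ i, w i * G i ^ 2 + 2 * u * ∑ i, w i * G i + u ^ 2 * ∑ i, w i := by
        rw [mul_sum, mul_sum, ← sum_add_distrib, ← sum_add_distrib]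
        exact sum_congr rfl fun i _ ↦ by ring
    _ ≤ v ^ 2 + 2 * u * v + u ^ 2 * 1 := by rw [hw_sum]; gcongr
    _ = (v + u) ^ 2 := by ring

lemma add_sq_le_mul_sq_add_mul_sq {s : ℝ} (hs : 0 < s) (a b : ℝ) :
    (a + b) ^ 2 ≤ (1 + s) * a ^ 2 + (1 + 1 / s) * b ^ 2 := by
  have : 0 ≤ (s * a - b) ^ 2 / s := by positivity
  have expand : (s * a - b) ^ 2 / s = s * a ^ 2 - 2 * a * b + 1 / s * b ^ 2 := by
    field_simp
    ring
  linarith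

variable {κ γ : Type*} [Fintype κ]

/-- The block bound for the random number `∑ i, h i` of surviving rows, apart from the bias of the
full block. -/
noncomputable def thinnedBound (C τ t : ℝ) (h : κ → ℝ) : ℝ :=
  t / τ * √(C * ∑ i, h i) + t * |∑ i, (h i / τ - 1)|

lemma blockBound_div_le (C τ : ℝ) {t : ℝ} (ht : 0 ≤ t) (h : κ → ℝ) :
    blockBound C (∑ i, h i) (t / τ) ≤ thinnedBound C τ t h + |t * Fintype.card κ - 1| := by
  have bias : t / τ * ∑ i, h i - 1 = t * ∑ i, (h i / τ - 1) + (t * Fintype.card κ - 1) := by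
    simp only [sum_sub_distrib, ← sum_div, sum_const, card_univ, nsmul_eq_mul]
    ring
  have := abs_add_le (t * ∑ i, (h i / τ - 1)) (t * Fintype.card κ - 1)
  rw [abs_mul, abs_of_nonneg ht] at this
  simp only [blockBound, thinnedBound, bias]
  linarith

lemma thinnedBound_sq_le {C τ s t : ℝ} (hC : 0 ≤ C) (hs : 0 < s) {h : κ → ℝ} (hh : ∀ i, 0 ≤ h i) :
    thinnedBound C τ t h ^ 2 ≤ (1 + s) * C * (t / τ) ^ 2 * ∑ i, h i +
      (1 + 1 / s) * t ^ 2 * (∑ i, (h i / τ - 1)) ^ 2 := by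
  refine (add_sq_le_mul_sq_add_mul_sq hs _ _).trans_eq ?_
  rw [mul_pow, mul_pow, Real.sq_sqrt (mul_nonneg hC (sum_nonneg fun i _ ↦ hh i)), sq_abs]
  ring

variable [DecidableEq κ] [Fintype γ] {p : γ → ℝ}

/-- The variance constant of a block whose rows survive with probability `τ`, the surviving rows
having variance constant `C`; `s` balances the two sources of variance. -/
noncomputable def thinnedConst (C τ s : ℝ) : ℝ :=
  ((1 + s) * C + 1 + 1 / s) / τ

lemma thinnedConst_nonneg {C τ s : ℝ} (hC : 0 ≤ C) (hτ : 0 < τ) (hs : 0 < s) :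
    0 ≤ thinnedConst C τ s := by
  unfold thinnedConst
  positivity

lemma sum_prod_mul_thinnedBound_sq_le (hp : ∀ c, 0 ≤ p c) (hp_sum : ∑ c, p c = 1) {h : γ → ℝ}
    (hh : ∀ c, h c = 0 ∨ h c = 1) {τ : ℝ} (hτ : 0 < τ) (mean_h : ∑ c, p c * h c = τ) {C s : ℝ}
    (hC : 0 ≤ C) (hs : 0 < s) (t : ℝ) :
    ∑ z : κ → γ, (∏ i, p (z i)) * thinnedBound C τ t (fun i ↦ h (z i)) ^ 2 ≤
      (t * √(thinnedConst C τ s * Fintype.card κ)) ^ 2 := by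
  have h_nonneg (c : γ) : 0 ≤ h c := by rcases hh c with hc | hc <;> simp [hc]
  have mean_g : ∑ c, p c * (h c / τ - 1) = 0 := by
    simp only [mul_sub, ← mul_div_assoc, mul_one, sum_sub_distrib, ← sum_div, mean_h, hp_sum]
    rw [div_self hτ.ne', sub_self]
  have var_g : ∑ c, p c * (h c / τ - 1) ^ 2 ≤ 1 / τ := by
    have expand (c : γ) : p c * (h c / τ - 1) ^ 2 = (1 / τ ^ 2 - 2 / τ) * (p c * h c) + p c := by
      rcases hh c with hc | hc <;> rw [hc] <;> ring
    simp only [expand, sum_add_distrib, ← mul_sum, mean_h, hp_sum]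
    field_simp
    linarith
  calc ∑ z : κ → γ, (∏ i, p (z i)) * thinnedBound C τ t (fun i ↦ h (z i)) ^ 2
      ≤ ∑ z : κ → γ, (∏ i, p (z i)) * ((1 + s) * C * (t / τ) ^ 2 * ∑ i, h (z i) +
          (1 + 1 / s) * t ^ 2 * (∑ i, (h (z i) / τ - 1)) ^ 2) :=
        sum_le_sum fun z _ ↦ mul_le_mul_of_nonneg_left
          (thinnedBound_sq_le hC hs fun i ↦ h_nonneg (z i)) (prod_nonneg fun i _ ↦ hp (z i))
    _ = (1 + s) * C * (t / τ) ^ 2 * (Fintype.card κ * τ) +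
          (1 + 1 / s) * t ^ 2 * (Fintype.card κ * ∑ c, p c * (h c / τ - 1) ^ 2) := by
        rw [← sum_prod_mul_sq_sum hp_sum mean_g]
        conv_rhs => enter [1, 2]; rw [← mean_h, ← sum_prod_mul_sum hp_sum]
        rw [mul_sum, mul_sum, ← sum_add_distrib]
        exact sum_congr rfl fun z _ ↦ by ring
    _ ≤ (1 + s) * C * (t / τ) ^ 2 * (Fintype.card κ * τ) +
          (1 + 1 / s) * t ^ 2 * (Fintype.card κ * (1 / τ)) := by gcongr
    _ = (t * √(thinnedConst C τ s * Fintype.card κ)) ^ 2 := by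
        rw [mul_pow, Real.sq_sqrt (mul_nonneg (thinnedConst_nonneg hC hτ hs) (Nat.cast_nonneg _)),
          thinnedConst]
        field_simp
        ring

lemma sum_prod_mul_blockBound_sq_le (hp : ∀ c, 0 ≤ p c) (hp_sum : ∑ c, p c = 1)
    (T : γ → Prop) [DecidablePred T] {τ : ℝ} (hτ : 0 < τ) (hT : ∑ c, (if T c then p c else 0) = τ)
    {C s t : ℝ} (hC : 0 ≤ C) (hs : 0 < s) (ht : 0 ≤ t) :
    ∑ z : κ → γ, (∏ i, p (z i)) * blockBound C (Fintype.card {i // T (z i)}) (t / τ) ^ 2 ≤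
      blockBound (thinnedConst C τ s) (Fintype.card κ) t ^ 2 := by
  have survivors (z : κ → γ) :
      (Fintype.card {i // T (z i)} : ℝ) = ∑ i, if T (z i) then (1 : ℝ) else 0 := by
    simp [Fintype.card_subtype]
  have mean_G_sq := sum_prod_mul_thinnedBound_sq_le (κ := κ) hp hp_sum
    (fun c ↦ (ite_eq_or_eq (T c) (1 : ℝ) 0).symm) hτ (by simpa using hT) hC hs t
  refine le_trans (sum_le_sum fun z _ ↦ ?_)
    (sum_mul_add_sq_le (fun z ↦ prod_nonneg fun i _ ↦ hp (z i)) (sum_prod_eq_one hp_sum)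
      (abs_nonneg _) (by positivity) mean_G_sq)
  rw [survivors]
  exact mul_le_mul_of_nonneg_left (pow_le_pow_left₀ (blockBound_nonneg _ _ (by positivity))
    (blockBound_div_le C τ ht _) 2) (prod_nonneg fun i _ ↦ hp (z i))

lemma sq_add_le_blockBound_sq {C N n t : ℝ} (hC : 0 ≤ C) (hN : 0 ≤ N) (hn : 0 ≤ n) (ht : 0 ≤ t) :
    blockBound C n t ^ 2 + t ^ 2 * (n * N) ≤ blockBound (N + C) n t ^ 2 := by
  have sqrt_le : √(C * n) ≤ √((N + C) * n) := by gcongr; linarith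
  have bias_le : t * √(C * n) * |t * n - 1| ≤ t * √((N + C) * n) * |t * n - 1| := by gcongr
  have sq_left : √(C * n) ^ 2 = C * n := Real.sq_sqrt (by positivity)
  have sq_right : √((N + C) * n) ^ 2 = (N + C) * n := Real.sq_sqrt (by positivity)
  unfold blockBound
  linear_combination 2 * bias_le + t ^ 2 * sq_left - t ^ 2 * sq_right

lemma sum_thinned_mul_add_markedProd_le (hp : ∀ c, 0 ≤ p c) (hp_sum : ∑ c, p c = 1)
    {T T' : γ → Prop} [DecidablePred T] [DecidablePred T'] {τ : ℝ} (hτ : 0 < τ)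
    (hT : ∑ c, (if T c then p c else 0) = τ) (hT' : ∑ c, (if T' c then p c else 0) = τ)
    {ν : γ → ℝ} {N : ℝ} (hN : 0 ≤ N) (hν : ∑ c, ν c = N)
    {C s t : ℝ} (hC : 0 ≤ C) (hs : 0 < s) (ht : 0 ≤ t) :
    ∑ z : κ → γ, ((∏ i, p (z i)) * (blockBound C (Fintype.card {i // T (z i)}) (t / τ) *
        blockBound C (Fintype.card {i // T' (z i)}) (t / τ)) +
          t ^ 2 * markedProd (fun i ↦ ν (z i)) (fun i ↦ p (z i))) ≤
      blockBound (N + thinnedConst C τ s) (Fintype.card κ) t ^ 2 := by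
  have marks : ∑ z : κ → γ, markedProd (fun i ↦ ν (z i)) (fun i ↦ p (z i)) =
      Fintype.card κ * N := by
    rw [sum_markedProd (fun _ : κ ↦ ν) (fun _ ↦ p), hp_sum, markedProd_one]
    simp [hν]
  have am_gm (z : κ → γ) (a b : ℝ) : (∏ i, p (z i)) * (a * b) ≤
      1 / 2 * ((∏ i, p (z i)) * a ^ 2) + 1 / 2 * ((∏ i, p (z i)) * b ^ 2) := by
    have := mul_nonneg (prod_nonneg fun i (_ : i ∈ univ) ↦ hp (z i)) (sq_nonneg (a - b))
    linarith
  have bound := sum_prod_mul_blockBound_sq_le (κ := κ) hp hp_sum T hτ hT hC hs ht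
  have bound' := sum_prod_mul_blockBound_sq_le (κ := κ) hp hp_sum T' hτ hT' hC hs ht
  rw [sum_add_distrib, ← mul_sum, marks]
  refine (add_le_add_left (sum_le_sum fun z _ ↦ am_gm z _ _) _).trans ?_
  rw [sum_add_distrib, ← mul_sum, ← mul_sum]
  have := sq_add_le_blockBound_sq (thinnedConst_nonneg hC hτ hs) hN
    (Fintype.card κ).cast_nonneg ht
  linarith

lemma sum_prod_mul_abs_le_blockBound (hp : ∀ c, 0 ≤ p c) (hp_sum : ∑ c, p c = 1) {M : γ → ℝ}
    (mean_M : ∑ c, p c * M c = 1) {N : ℝ} (mean_sq_M : ∑ c, p c * M c ^ 2 = N) {t : ℝ}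
    (ht : 0 ≤ t) :
    ∑ z : κ → γ, (∏ i, p (z i)) * |t * ∑ i, M (z i) - 1| ≤
      blockBound (N - 1) (Fintype.card κ) t := by
  have hw (z : κ → γ) : 0 ≤ ∏ i, p (z i) := prod_nonneg fun i _ ↦ hp (z i)
  have mean_sub : ∑ c, p c * (M c - 1) = 0 := by
    simp only [mul_sub, mul_one, sum_sub_distrib, mean_M, hp_sum, sub_self]
  have var_M : ∑ c, p c * (M c - 1) ^ 2 = N - 1 := by
    have expand (c : γ) : p c * (M c - 1) ^ 2 = p c * M c ^ 2 - 2 * (p c * M c) + p c := by ring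
    simp only [expand, sum_add_distrib, sum_sub_distrib, ← mul_sum, mean_M, mean_sq_M, hp_sum]
    ring
  have var_nonneg : 0 ≤ N - 1 := var_M ▸ sum_nonneg fun c _ ↦ mul_nonneg (hp c) (sq_nonneg _)
  have var_sum : ∑ z : κ → γ, (∏ i, p (z i)) * |t * ∑ i, (M (z i) - 1)| ^ 2 ≤
      (t * √((N - 1) * Fintype.card κ)) ^ 2 := by
    simp only [sq_abs, mul_pow, mul_left_comm _ (t ^ 2), ← mul_sum]
    rw [sum_prod_mul_sq_sum hp_sum mean_sub, var_M, Real.sq_sqrt (by positivity)]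
    exact (congrArg _ (mul_comm _ _)).le
  refine le_of_sq_le_sq ?_ (blockBound_nonneg _ _ ht)
  refine (Real.pow_arith_mean_le_arith_mean_pow_of_even univ _ _ (fun z _ ↦ hw z)
    (sum_prod_eq_one hp_sum) even_two).trans (le_trans (sum_le_sum fun z _ ↦ ?_)
      (sum_mul_add_sq_le hw (sum_prod_eq_one hp_sum) (abs_nonneg (t * Fintype.card κ - 1))
        (by positivity) var_sum))
  have center : t * ∑ i, M (z i) - 1 =
      t * ∑ i, (M (z i) - 1) + (t * Fintype.card κ - 1) := by
    simp only [sum_sub_distrib, sum_const, card_univ, nsmul_eq_mul]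
    ring
  rw [center]
  exact mul_le_mul_of_nonneg_left (pow_le_pow_left₀ (abs_nonneg _) (abs_add_le _ _) 2) (hw z)

end BlockBound

section Cylinders

variable {μ μ' : Type*} {κ : μ → Type*} {κ' : μ' → Type*} {K : Type*} {S : Finset K}

/-- The matrices of the tuples `X` and `Y` agree outside column `j`. -/
def EqOffColumn (j : K) (X Y : ∀ b, κ b → K → Bool) : Prop :=
  ∀ b i j', j' ≠ j → X b i j' = Y b i j'

/-- The functions `∏ j ∈ S, φ j` with `|φ j| ≤ 1` and `φ j` independent of the `j`-th columns.
Unlike cylinder intersections, they are preserved by Cauchy–Schwarz. -/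
def IsBoundedCylinder (S : Finset K) (χ : (∀ b, κ b → K → Bool) → ℝ) : Prop :=
  ∃ φ : K → (∀ b, κ b → K → Bool) → ℝ, (∀ j ∈ S, ∀ X, |φ j X| ≤ 1) ∧
    (∀ j ∈ S, ∀ X Y, EqOffColumn j X Y → φ j X = φ j Y) ∧ ∀ X, χ X = ∏ j ∈ S, φ j X

namespace IsBoundedCylinder

variable {χ ψ : (∀ b, κ b → K → Bool) → ℝ}

lemma comp (hχ : IsBoundedCylinder S χ)
    (f : (∀ b, κ' b → K → Bool) → ∀ b, κ b → K → Bool)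
    (hf : ∀ j X Y, EqOffColumn j X Y → EqOffColumn j (f X) (f Y)) :
    IsBoundedCylinder S fun X ↦ χ (f X) := by
  obtain ⟨φ, le_one, indep, prod_eq⟩ := hχ
  exact ⟨fun j X ↦ φ j (f X), fun j hj X ↦ le_one j hj _,
    fun j hj X Y h ↦ indep j hj _ _ (hf j X Y h), fun X ↦ prod_eq _⟩

lemma mul (hχ : IsBoundedCylinder S χ) (hψ : IsBoundedCylinder S ψ) :
    IsBoundedCylinder S fun X ↦ χ X * ψ X := by
  obtain ⟨φ, le_one, indep, prod_eq⟩ := hχ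
  obtain ⟨φ', le_one', indep', prod_eq'⟩ := hψ
  refine ⟨fun j X ↦ φ j X * φ' j X, fun j hj X ↦ ?_, fun j hj X Y h ↦ ?_, fun X ↦ ?_⟩
  · rw [abs_mul]
    exact mul_le_one₀ (le_one j hj X) (abs_nonneg _) (le_one' j hj X)
  · simp only [indep j hj X Y h, indep' j hj X Y h]
  · simp only [prod_eq, prod_eq', prod_mul_distrib]

lemma mono {S' : Finset K} (hχ : IsBoundedCylinder S χ) (hS : S ⊆ S') :
    IsBoundedCylinder S' χ := by
  classical
  obtain ⟨φ, le_one, indep, prod_eq⟩ := hχ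
  refine ⟨fun j X ↦ if j ∈ S then φ j X else 1, fun j _ X ↦ ?_, fun j _ X Y h ↦ ?_, fun X ↦ ?_⟩
  · dsimp only
    split_ifs with hj
    exacts [le_one j hj X, abs_one.le]
  · dsimp only
    split_ifs with hj
    exacts [indep j hj X Y h, rfl]
  · rw [prod_eq, prod_ite_mem, inter_eq_right.mpr hS]

end IsBoundedCylinder

lemma isBoundedCylinder_of_isCylinderT {m k : ℕ} {nn : Fin m → ℕ} {S : Finset (Fin k)}
    {χ : (∀ b, Fin (nn b) → Fin k → Bool) → ℝ} (hχ : IsCylinderT nn k S χ) :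
    IsBoundedCylinder S χ := by
  obtain ⟨φ, zero_or_one, indep, prod_eq⟩ := hχ
  refine ⟨φ, fun j hj X ↦ ?_, indep, prod_eq⟩
  rcases zero_or_one j hj X with h | h <;> simp [h]

variable [DecidableEq K]

/-- The row with entry `y` in column `j` and the entries of `x` in the other columns. -/
def insertBit (j : K) (y : Bool) (x : {i // i ≠ j} → Bool) : K → Bool :=
  (Equiv.funSplitAt j Bool).symm (y, x)

lemma insertBit_same (j : K) (y : Bool) (x : {i // i ≠ j} → Bool) : insertBit j y x j = y := by
  simp [insertBit, Equiv.funSplitAt, Equiv.piSplitAt]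

lemma insertBit_of_ne {j l : K} (hl : l ≠ j) (y : Bool) (x : {i // i ≠ j} → Bool) :
    insertBit j y x l = x ⟨l, hl⟩ := by
  simp [insertBit, Equiv.funSplitAt, Equiv.piSplitAt, hl]

lemma insertBit_eq_top_iff {j : K} {y : Bool} {x : {i // i ≠ j} → Bool} :
    insertBit j y x = ⊤ ↔ y = true ∧ x = ⊤ := by
  rw [insertBit, Equiv.symm_apply_eq, Prod.ext_iff]
  rfl

/-- The tuple of matrices whose `j`-th columns are `y` and whose remaining columns are `x`. -/
def insertColumn (j : K) (x : ∀ b, κ b → {i // i ≠ j} → Bool) (y : ∀ b, κ b → Bool) :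
    ∀ b, κ b → K → Bool :=
  fun b i ↦ insertBit j (y b i) (x b i)

lemma IsBoundedCylinder.exists_insertColumn_eq_mul {j : K} (hj : j ∈ S)
    {χ : (∀ b, κ b → K → Bool) → ℝ} (hχ : IsBoundedCylinder S χ) :
    ∃ (φ : (∀ b, κ b → {i // i ≠ j} → Bool) → ℝ)
      (ψ : (∀ b, κ b → Bool) → (∀ b, κ b → {i // i ≠ j} → Bool) → ℝ),
      (∀ x, |φ x| ≤ 1) ∧ (∀ y, IsBoundedCylinder (S.subtype (· ≠ j)) (ψ y)) ∧
      ∀ x y, χ (insertColumn j x y) = φ x * ψ y x := by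
  obtain ⟨φ, le_one, indep, prod_eq⟩ := hχ
  refine ⟨fun x ↦ φ j (insertColumn j x fun _ _ ↦ true),
    fun y x ↦ ∏ l ∈ S.subtype (· ≠ j), φ l (insertColumn j x y), fun x ↦ le_one j hj _,
    fun y ↦ ⟨fun l x ↦ φ l (insertColumn j x y), fun l hl x ↦ le_one l (mem_subtype.mp hl) _,
      fun l hl x x' h ↦ indep l (mem_subtype.mp hl) _ _ fun b i j' hj' ↦ ?_, fun x ↦ rfl⟩,
    fun x y ↦ ?_⟩
  · obtain rfl | hne := eq_or_ne j' j
    · simp only [insertColumn, insertBit_same]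
    · simpa only [insertColumn, insertBit_of_ne hne] using h b i _ (Subtype.coe_ne_coe.mp hj')
  · dsimp only
    rw [prod_eq, ← mul_prod_erase S _ hj, ← filter_ne' S j,
      ← prod_subtype_eq_prod_filter (fun l ↦ φ l (insertColumn j x y))]
    congr 1
    exact indep j hj _ _ fun b i j' hj' ↦ by simp only [insertColumn, insertBit_of_ne hj']

lemma sum_rows_prod [Fintype μ] [DecidableEq μ] [∀ b, Fintype (κ b)] [∀ b, DecidableEq (κ b)]
    {α γ : Type*} [Fintype α] [Fintype γ] (f : (∀ b, κ b → α × γ) → ℝ) :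
    ∑ z, f z = ∑ y : ∀ b, κ b → α, ∑ x : ∀ b, κ b → γ, f fun b i ↦ (y b i, x b i) := by
  let e : ((∀ b, κ b → α) × (∀ b, κ b → γ)) ≃ (∀ b, κ b → α × γ) :=
    { toFun := fun z b i ↦ (z.1 b i, z.2 b i)
      invFun := fun z ↦ (fun b i ↦ (z b i).1, fun b i ↦ (z b i).2)
      left_inv := fun _ ↦ rfl
      right_inv := fun _ ↦ rfl }
  rw [← e.sum_comp, Fintype.sum_prod_type]
  rfl

lemma sum_insertColumn [Fintype K] [Fintype μ] [DecidableEq μ] [∀ b, Fintype (κ b)]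
    [∀ b, DecidableEq (κ b)] (j : K) (f : (∀ b, κ b → K → Bool) → ℝ) :
    ∑ X, f X = ∑ x, ∑ y, f (insertColumn j x y) := by
  let e : (∀ b, κ b → Bool × ({i // i ≠ j} → Bool)) ≃ (∀ b, κ b → K → Bool) :=
    Equiv.piCongrRight fun _ ↦ Equiv.piCongrRight fun _ ↦ (Equiv.funSplitAt j Bool).symm
  rw [← e.sum_comp, sum_rows_prod, sum_comm]
  rfl

end Cylinders

section FixingRows

lemma abs_sum_mul_le_of_forall_fiber {Ω Ω' Υ : Type*} [Fintype Ω] [Fintype Ω'] [Fintype Υ]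
    (e : Ω ≃ Ω' × Υ) (f : Ω' → ℝ) {w : Υ → ℝ} (hw : ∀ y, 0 ≤ w y) (χ : Ω → ℝ) {B : ℝ}
    (h : ∀ y, |∑ x, f x * χ (e.symm (x, y))| ≤ B) :
    |∑ ω, f (e ω).1 * w (e ω).2 * χ ω| ≤ B * ∑ y, w y := by
  calc |∑ ω, f (e ω).1 * w (e ω).2 * χ ω|
      = |∑ y, w y * ∑ x, f x * χ (e.symm (x, y))| := by
        rw [← e.symm.sum_comp, Fintype.sum_prod_type_right]
        simp only [Equiv.apply_symm_apply, mul_sum, mul_assoc, mul_left_comm]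
    _ ≤ ∑ y, w y * B := by
        refine (abs_sum_le_sum_abs _ _).trans (sum_le_sum fun y _ ↦ ?_)
        rw [abs_mul, abs_of_nonneg (hw y)]
        exact mul_le_mul_of_nonneg_left (h y) (hw y)
    _ = B * ∑ y, w y := by rw [← sum_mul, mul_comm]

lemma abs_sum_prod_add_le {μ : Type*} [Fintype μ] [DecidableEq μ] {α : μ → Type*}
    [∀ b, Fintype (α b)] (f : ∀ b, α b → ℝ) {g : ∀ b, α b → ℝ} (hg : ∀ b a, 0 ≤ g b a)
    (χ : (∀ b, α b) → ℝ) (c : μ → ℝ)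
    (h : ∀ (P : Finset μ) (y : ∀ b : {b // b ∉ P}, α b),
      |∑ x : ∀ b : {b // b ∈ P}, α b,
        (∏ b : {b // b ∈ P}, f b (x b)) * χ ((Equiv.piEquivPiSubtypeProd (· ∈ P) α).symm (x, y))| ≤
          ∏ b : {b // b ∈ P}, c b) :
    |∑ x, (∏ b, (f b (x b) + g b (x b))) * χ x| ≤ ∏ b, (c b + ∑ a, g b a) := by
  have expand (u v : μ → ℝ) : ∏ b, (u b + v b) =
      ∑ P : Finset μ, (∏ b : {b // b ∈ P}, u b) * ∏ b : {b // b ∉ P}, v b := by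
    rw [Fintype.prod_add]
    refine sum_congr rfl fun P _ ↦ ?_
    rw [prod_subtype P (fun _ ↦ Iff.rfl), prod_subtype Pᶜ fun _ ↦ mem_compl]
  rw [expand]
  simp only [expand, sum_mul]
  rw [sum_comm]
  refine (abs_sum_le_sum_abs _ _).trans (sum_le_sum fun P _ ↦ ?_)
  rw [Fintype.prod_sum]
  exact abs_sum_mul_le_of_forall_fiber (Equiv.piEquivPiSubtypeProd (· ∈ P) α)
    (fun x ↦ ∏ b : {b // b ∈ P}, f b (x b)) (w := fun y ↦ ∏ b : {b // b ∉ P}, g b (y b))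
    (fun y ↦ prod_nonneg fun b _ ↦ hg b (y b)) χ (h P)

/-- Separates the rows of each block with tag `some c` from those with tag `none`. -/
def splitRows {μ L α : Type*} {κ : μ → Type*} (tag : ∀ b, κ b → Option L) :
    (∀ b, κ b → α) ≃
      (∀ c : μ × L, {i // tag c.1 i = some c.2} → α) × (∀ b, {i // tag b i = none} → α) where
  toFun X := (fun c i ↦ X c.1 i, fun b i ↦ X b i)
  invFun X b i :=
    match h : tag b i with
    | none => X.2 b ⟨i, h⟩
    | some l => X.1 (b, l) ⟨i, h⟩
  left_inv X := by
    funext b i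
    simp only
    split <;> rfl
  right_inv X := by
    refine Prod.ext ?_ ?_
    · funext ⟨b, l⟩ ⟨i, h⟩
      simp only
      split
      · next h' => cases h'.symm.trans h
      · next h' => cases h'.symm.trans h; rfl
    · funext b ⟨i, h⟩
      simp only
      split
      · rfl
      · next h' => cases h'.symm.trans h

section

variable {μ L α : Type*} {κ : μ → Type*} {tag : ∀ b, κ b → Option L}
  (Z : ∀ c : μ × L, {i // tag c.1 i = some c.2} → α) (Y : ∀ b, {i // tag b i = none} → α)
  {b : μ} {i : κ b}

lemma splitRows_symm_of_none (h : tag b i = none) : (splitRows tag).symm (Z, Y) b i = Y b ⟨i, h⟩ :=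
  congr_fun₂ (congrArg Prod.snd ((splitRows tag).apply_symm_apply (Z, Y))) b ⟨i, h⟩

lemma splitRows_symm_of_some {l : L} (h : tag b i = some l) :
    (splitRows tag).symm (Z, Y) b i = Z (b, l) ⟨i, h⟩ :=
  congr_fun₂ (congrArg Prod.fst ((splitRows tag).apply_symm_apply (Z, Y))) (b, l) ⟨i, h⟩

end

end FixingRows

section TensorBound

variable {K : Type*} [Fintype K] [DecidableEq K]

/-- A block of rows of which one, planted, is equal to `o`, and the others are drawn from `r`;
see `signedBlock`. -/
noncomputable def plantedBlock {κ α : Type*} [Fintype κ] [DecidableEq κ] [DecidableEq α] (o : α)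
    (r : α → ℝ) (t : ℝ) (Y : κ → α) : ℝ :=
  signedBlock t (fun i ↦ (Pi.single o 1 : α → ℝ) (Y i)) (fun i ↦ r (Y i))

/-- Tensor products of signed blocks with planted all-ones rows and row distribution `r` have
correlation with `S`-cylinders at most the product of the block bounds with constant `C`.
The blocks are arbitrary, so that the statement can be proved by induction on `S`. -/
def TensorBound (S : Finset K) (r : (K → Bool) → ℝ) (C : ℝ) : Prop :=
  ∀ (μ : Type) [Fintype μ] [DecidableEq μ] (κ : μ → Type) [∀ b, Fintype (κ b)]
    [∀ b, DecidableEq (κ b)] (t : μ → ℝ) (χ : (∀ b, κ b → K → Bool) → ℝ),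
    (∀ b, 0 ≤ t b) → IsBoundedCylinder S χ →
    |∑ X : ∀ b, κ b → K → Bool, (∏ b, plantedBlock ⊤ r (t b) (X b)) * χ X| ≤
      ∏ b, blockBound C (Fintype.card (κ b)) (t b)

lemma TensorBound.mono {S : Finset K} {r : (K → Bool) → ℝ} {C C' : ℝ} (h : TensorBound S r C)
    (hC : C ≤ C') : TensorBound S r C' :=
  fun μ _ _ κ _ _ t χ ht hχ ↦ (h μ κ t χ ht hχ).trans <|
    prod_le_prod (fun b _ ↦ blockBound_nonneg _ _ (ht b))
      fun b _ ↦ blockBound_mono hC (Nat.cast_nonneg _) (ht b)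

/-- One row-split block: the rows tagged `none` carry the weight `q`, the others form two planted
blocks. -/
noncomputable def thinnedBlock {κ α : Type*} [Fintype κ] [DecidableEq κ] [DecidableEq α] (o : α)
    (r : α → ℝ) (t : ℝ) (tag : κ → Option Bool) (q : κ → α → ℝ) (Y : κ → α) : ℝ :=
  (∏ i : {i // tag i = none}, q i (Y i)) *
    plantedBlock o r t (fun i : {i // tag i = some true} ↦ Y i) *
    plantedBlock o r t (fun i : {i // tag i = some false} ↦ Y i)

/-- The bound for a `thinnedBlock` summed against a cylinder. -/
noncomputable def thinnedBlockBound {κ α : Type*} [Fintype κ] [Fintype α] (C t : ℝ)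
    (tag : κ → Option Bool) (q : κ → α → ℝ) : ℝ :=
  (∏ i : {i // tag i = none}, ∑ u, q i u) *
    (blockBound C (Fintype.card {i // tag i = some true}) t *
      blockBound C (Fintype.card {i // tag i = some false}) t)

lemma thinnedBlockBound_nonneg {κ α : Type*} [Fintype κ] [Fintype α] (C : ℝ) {t : ℝ} (ht : 0 ≤ t)
    (tag : κ → Option Bool) {q : κ → α → ℝ} (hq : ∀ i u, 0 ≤ q i u) :
    0 ≤ thinnedBlockBound C t tag q :=
  mul_nonneg (prod_nonneg fun i _ ↦ sum_nonneg fun u _ ↦ hq i u)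
    (mul_nonneg (blockBound_nonneg _ _ ht) (blockBound_nonneg _ _ ht))

variable {μ : Type} [Fintype μ] [DecidableEq μ] {κ : μ → Type} [∀ b, Fintype (κ b)]
    [∀ b, DecidableEq (κ b)] {S : Finset K} {r : (K → Bool) → ℝ} {C : ℝ}

lemma TensorBound.abs_sum_thinnedBlock_mul_le (h : TensorBound S r C)
    (tag : ∀ b, κ b → Option Bool) {q : ∀ b, κ b → (K → Bool) → ℝ} (hq : ∀ b i u, 0 ≤ q b i u)
    {t : μ → ℝ} (ht : ∀ b, 0 ≤ t b) {χ : (∀ b, κ b → K → Bool) → ℝ}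
    (hχ : IsBoundedCylinder S χ) :
    |∑ X : ∀ b, κ b → K → Bool, (∏ b, thinnedBlock ⊤ r (t b) (tag b) (q b) (X b)) * χ X| ≤
      ∏ b, thinnedBlockBound C (t b) (tag b) (q b) := by
  have fiber (Y : ∀ b, {i // tag b i = none} → K → Bool) :
      |∑ Z : ∀ c : μ × Bool, {i // tag c.1 i = some c.2} → K → Bool,
        (∏ c : μ × Bool, plantedBlock ⊤ r (t c.1) (Z c)) * χ ((splitRows tag).symm (Z, Y))| ≤
      ∏ c : μ × Bool, blockBound C (Fintype.card {i // tag c.1 i = some c.2}) (t c.1) := by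
    have cyl : IsBoundedCylinder S fun Z ↦ χ ((splitRows tag).symm (Z, Y)) := by
      refine hχ.comp (fun Z ↦ (splitRows tag).symm (Z, Y)) fun j Z Z' hZ b i j' hj' ↦ ?_
      cases tagged : tag b i with
      | none => simp only [splitRows_symm_of_none _ _ tagged]
      | some l => simpa only [splitRows_symm_of_some _ _ tagged] using hZ _ _ _ hj'
    exact h (μ × Bool) (fun c ↦ {i // tag c.1 i = some c.2}) (fun c ↦ t c.1) _ (fun c ↦ ht c.1) cyl
  have regroup := abs_sum_mul_le_of_forall_fiber (splitRows tag)
    (fun Z ↦ ∏ c : μ × Bool, plantedBlock ⊤ r (t c.1) (Z c))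
    (w := fun Y ↦ ∏ b, ∏ i : {i // tag b i = none}, q b i (Y b i))
    (fun Y ↦ prod_nonneg fun b _ ↦ prod_nonneg fun i _ ↦ hq b i _) χ fiber
  simp only [Fintype.prod_prod_type, Fintype.prod_bool, prod_mul_distrib, splitRows,
    Equiv.coe_fn_mk] at regroup
  simpa only [thinnedBlock, thinnedBlockBound, prod_mul_distrib, Fintype.prod_sum, mul_assoc,
    mul_comm, mul_left_comm] using regroup

lemma TensorBound.abs_sum_thinnedBlock_add_mul_le (h : TensorBound S r C)
    (tag : ∀ b, κ b → Option Bool) {q : ∀ b, κ b → (K → Bool) → ℝ} (hq : ∀ b i u, 0 ≤ q b i u)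
    {t : μ → ℝ} (ht : ∀ b, 0 ≤ t b) {a : μ → ℝ} (ha : ∀ b, 0 ≤ a b)
    {g : ∀ b, (κ b → K → Bool) → ℝ} (hg : ∀ b Y, 0 ≤ g b Y)
    {χ : (∀ b, κ b → K → Bool) → ℝ} (hχ : IsBoundedCylinder S χ) :
    |∑ X : ∀ b, κ b → K → Bool,
        (∏ b, (a b * thinnedBlock ⊤ r (t b) (tag b) (q b) (X b) + g b (X b))) * χ X| ≤
      ∏ b, (a b * thinnedBlockBound C (t b) (tag b) (q b) + ∑ Y, g b Y) := by
  refine abs_sum_prod_add_le (fun b Y ↦ a b * thinnedBlock ⊤ r (t b) (tag b) (q b) Y) hg χ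
    (fun b ↦ a b * thinnedBlockBound C (t b) (tag b) (q b)) fun P Y ↦ ?_
  have cyl : IsBoundedCylinder S fun X : ∀ b : {b // b ∈ P}, κ b → K → Bool ↦
      χ ((Equiv.piEquivPiSubtypeProd (· ∈ P) fun b ↦ κ b → K → Bool).symm (X, Y)) := by
    refine hχ.comp (fun X ↦ (Equiv.piEquivPiSubtypeProd (· ∈ P) _).symm (X, Y))
      fun j X X' hX b i j' hj' ↦ ?_
    by_cases hb : b ∈ P
    · simpa [Equiv.piEquivPiSubtypeProd, hb] using hX _ _ _ hj'
    · simp [Equiv.piEquivPiSubtypeProd, hb]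
  have bound := h.abs_sum_thinnedBlock_mul_le (fun b : {b // b ∈ P} ↦ tag b)
    (q := fun b ↦ q b) (fun b ↦ hq b) (t := fun b ↦ t b) (fun b ↦ ht b) cyl
  simp only [prod_mul_distrib, mul_assoc, ← mul_sum, abs_mul,
    abs_of_nonneg (prod_nonneg fun b (_ : b ∈ univ) ↦ ha _)]
  exact mul_le_mul_of_nonneg_left bound (prod_nonneg fun b _ ↦ ha _)

end TensorBound

section ColumnSplit

variable {K : Type*} [Fintype K] [DecidableEq K]

/-- A disintegration of the row distribution `r` along column `j`: `base` is the law of the other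
entries and `bit · x` the conditional law of entry `j`. In the row `⊤` the other entries have
probability `1 / N` and force entry `j` to be `false`, so that entry `j` decides whether such a row
was planted. -/
structure ColumnSplit (j : K) (r : (K → Bool) → ℝ) (N : ℝ) where
  base : ({i // i ≠ j} → Bool) → ℝ
  bit : Bool → ({i // i ≠ j} → Bool) → ℝ
  base_nonneg : ∀ x, 0 ≤ base x
  bit_nonneg : ∀ y x, 0 ≤ bit y x
  sum_base : ∑ x, base x = 1
  base_mul_sum_bit : ∀ x, base x * ∑ y, bit y x = base x
  law_eq : ∀ y x, r (insertBit j y x) = base x * bit y x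
  base_top_mul : base ⊤ * N = 1
  bit_true_top : bit true ⊤ = 0
  bit_false_top : bit false ⊤ = 1

namespace ColumnSplit

variable {j : K} {r : (K → Bool) → ℝ} {N : ℝ}

lemma index_nonneg (d : ColumnSplit j r N) : 0 ≤ N :=
  (pos_of_mul_pos_right (d.base_top_mul ▸ one_pos) (d.base_nonneg ⊤)).le

/-- The density, relative to `base`, of a planted row with entry `y` in column `j`. -/
def mark (_ : ColumnSplit j r N) (y : Bool) (x : {i // i ≠ j} → Bool) : ℝ :=
  if y then (Pi.single ⊤ N : ({i // i ≠ j} → Bool) → ℝ) x else 0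

section

variable (d : ColumnSplit j r N)

lemma mark_nonneg (y : Bool) (x : {i // i ≠ j} → Bool) : 0 ≤ d.mark y x := by
  have := d.index_nonneg
  simp only [mark, Pi.single_apply]
  split_ifs <;> simp [this]

lemma base_mul_single (x : {i // i ≠ j} → Bool) :
    d.base x * (Pi.single ⊤ N : ({i // i ≠ j} → Bool) → ℝ) x =
      (Pi.single ⊤ 1 : ({i // i ≠ j} → Bool) → ℝ) x := by
  obtain rfl | hx := eq_or_ne x ⊤
  · simp only [Pi.single_eq_same, d.base_top_mul]
  · simp only [Pi.single_eq_of_ne hx, mul_zero]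

lemma single_insertBit (y : Bool) (x : {i // i ≠ j} → Bool) :
    (Pi.single ⊤ 1 : (K → Bool) → ℝ) (insertBit j y x) = d.base x * d.mark y x := by
  cases y
  · simp [mark, insertBit_eq_top_iff]
  · simp [mark, base_mul_single, Pi.single_apply _ (1 : ℝ), insertBit_eq_top_iff]

lemma mark_mul_bit (y : Bool) (x : {i // i ≠ j} → Bool) : d.mark y x * d.bit y x = 0 := by
  cases y
  · simp [mark]
  · obtain rfl | hx := eq_or_ne x ⊤ <;> simp [mark, d.bit_true_top, *]

variable {κ : Type*} [Fintype κ] [DecidableEq κ]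

lemma plantedBlock_insertBit (t : ℝ) (y : κ → Bool) (x : κ → {i // i ≠ j} → Bool) :
    plantedBlock ⊤ r t (fun i ↦ insertBit j (y i) (x i)) =
      (∏ i, d.base (x i)) *
        signedBlock t (fun i ↦ d.mark (y i) (x i)) (fun i ↦ d.bit (y i) (x i)) := by
  simp only [plantedBlock, d.single_insertBit, d.law_eq, signedBlock_mul]

lemma sum_plantedBlock_insertBit (t : ℝ) (x : κ → {i // i ≠ j} → Bool) :
    ∑ y : κ → Bool, plantedBlock ⊤ r t (fun i ↦ insertBit j (y i) (x i)) =
      (∏ i, d.base (x i)) *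
        (t * ∑ i, (Pi.single ⊤ N : ({i // i ≠ j} → Bool) → ℝ) (x i) - 1) := by
  have sum_mark (x : {i // i ≠ j} → Bool) :
      ∑ y, d.mark y x = (Pi.single ⊤ N : ({i // i ≠ j} → Bool) → ℝ) x := by
    simp [mark]
  simp only [d.plantedBlock_insertBit, ← mul_sum]
  rw [sum_signedBlock t (fun i y ↦ d.mark y (x i)) (fun i y ↦ d.bit y (x i)), ← signedBlock_mul]
  simp only [sum_mark, d.base_mul_sum_bit]
  simpa [signedBlock, markedProd_one] using
    signedBlock_mul t (fun i ↦ d.base (x i))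
      (fun i ↦ (Pi.single ⊤ N : ({i // i ≠ j} → Bool) → ℝ) (x i)) fun _ ↦ 1

lemma sum_prod_base_mul_abs_le {t : ℝ} (ht : 0 ≤ t) :
    ∑ x : κ → {i // i ≠ j} → Bool, (∏ i, d.base (x i)) *
        |t * ∑ i, (Pi.single ⊤ N : ({i // i ≠ j} → Bool) → ℝ) (x i) - 1| ≤
      blockBound (N - 1) (Fintype.card κ) t := by
  refine sum_prod_mul_abs_le_blockBound d.base_nonneg d.sum_base ?_ ?_ ht
  · simp [base_mul_single]
  · simp [sq, ← mul_assoc, Pi.single_apply, d.base_top_mul]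

end

/- The conditional expectation given the other columns is bounded pointwise, since the cylinder does
not depend on column `j`. -/
lemma tensorBound_singleton (d : ColumnSplit j r N) : TensorBound {j} r (N - 1) := by
  intro μ _ _ κ _ _ t χ ht hχ
  obtain ⟨φ, ψ, abs_φ_le, hψ, χ_eq⟩ := hχ.exists_insertColumn_eq_mul (mem_singleton_self j)
  have ψ_eq (y x) : ψ y x = 1 := by
    obtain ⟨ψ', -, -, prod_eq⟩ := hψ y
    rw [prod_eq]
    exact prod_eq_one fun l hl ↦ absurd (mem_singleton.mp (mem_subtype.mp hl)) l.2
  have fiber (x : ∀ b, κ b → {i // i ≠ j} → Bool) :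
      |∑ y, (∏ b, plantedBlock ⊤ r (t b) (insertColumn j x y b)) * χ (insertColumn j x y)| ≤
        ∏ b, (∏ i, d.base (x b i)) *
          |t b * ∑ i, (Pi.single ⊤ N : ({i // i ≠ j} → Bool) → ℝ) (x b i) - 1| := by
    have h := Fintype.prod_sum fun b (y : κ b → Bool) ↦
      plantedBlock ⊤ r (t b) (fun i ↦ insertBit j (y i) (x b i))
    simp only [d.sum_plantedBlock_insertBit] at h
    simp only [χ_eq, ψ_eq, mul_one, ← sum_mul]
    rw [show ∑ y, ∏ b, plantedBlock ⊤ r (t b) (insertColumn j x y b) = _ from h.symm, abs_mul,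
      abs_prod]
    refine (mul_le_of_le_one_right (by positivity) (abs_φ_le x)).trans_eq ?_
    refine prod_congr rfl fun b _ ↦ ?_
    rw [abs_mul, abs_of_nonneg (prod_nonneg fun i _ ↦ d.base_nonneg _)]
  rw [sum_insertColumn j]
  refine (abs_sum_le_sum_abs _ _).trans ((sum_le_sum fun x _ ↦ fiber x).trans ?_)
  rw [← Fintype.prod_sum fun b (x : κ b → {i // i ≠ j} → Bool) ↦ (∏ i, d.base (x i)) *
    |t b * ∑ i, (Pi.single ⊤ N : ({i // i ≠ j} → Bool) → ℝ) (x i) - 1|]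
  exact prod_le_prod (fun b _ ↦ sum_nonneg fun x _ ↦ mul_nonneg
    (prod_nonneg fun i _ ↦ d.base_nonneg _) (abs_nonneg _))
    fun b _ ↦ d.sum_prod_base_mul_abs_le (ht b)

end ColumnSplit

end ColumnSplit

section CauchySchwarz

variable {K : Type*} [Fintype K] [DecidableEq K]

/-- Two copies of an entry in column `j`, sharing the rest of the row: rows with equal copies are
tagged `none`, and the others by the first copy. -/
def pairTag (z : Bool × Bool) : Option Bool :=
  if z.1 = z.2 then none else some z.1

lemma eq_of_pairTag_eq_some {z : Bool × Bool} {c : Bool} (hz : pairTag z = some c) :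
    z = (c, !c) := by
  revert z c
  decide

lemma fst_eq_snd_of_pairTag_eq_none {z : Bool × Bool} (hz : pairTag z = none) : z.1 = z.2 := by
  revert z
  decide

namespace ColumnSplit

variable {j : K} {r : (K → Bool) → ℝ} {N : ℝ} (d : ColumnSplit j r N)

/-- The density of a row, drawn from `r`, together with a second copy of its entry in column `j`. -/
def pairWeight (z : Bool × Bool) (x : {i // i ≠ j} → Bool) : ℝ :=
  d.base x * d.bit z.1 x * d.bit z.2 x

/-- The density of a row that is planted for both copies of its entry in column `j`. -/
def plantedWeight (z : Bool × Bool) (x : {i // i ≠ j} → Bool) : ℝ :=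
  d.base x * d.mark z.1 x * d.mark z.2 x

lemma pairWeight_nonneg (z : Bool × Bool) (x : {i // i ≠ j} → Bool) : 0 ≤ d.pairWeight z x :=
  mul_nonneg (mul_nonneg (d.base_nonneg x) (d.bit_nonneg _ x)) (d.bit_nonneg _ x)

lemma plantedWeight_nonneg (z : Bool × Bool) (x : {i // i ≠ j} → Bool) :
    0 ≤ d.plantedWeight z x :=
  mul_nonneg (mul_nonneg (d.base_nonneg x) (d.mark_nonneg _ x)) (d.mark_nonneg _ x)

lemma sum_pairWeight : ∑ z, ∑ x, d.pairWeight z x = 1 := by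
  rw [sum_comm]
  have fiber (x : {i // i ≠ j} → Bool) : ∑ z, d.pairWeight z x = d.base x := by
    have := d.base_mul_sum_bit x
    simp only [Fintype.sum_bool] at this
    simp only [pairWeight, Fintype.sum_prod_type, Fintype.sum_bool]
    linear_combination (d.bit true x + d.bit false x + 1) * this
  simp only [fiber, d.sum_base]

lemma sum_plantedWeight : ∑ z, ∑ x, d.plantedWeight z x = N := by
  simp [plantedWeight, mark, Fintype.sum_prod_type, Pi.single_apply, d.base_top_mul]

variable {r' : ({i // i ≠ j} → Bool) → ℝ} {τ : ℝ}

lemma pairWeight_of_ne (hpair : ∀ x, d.base x * d.bit true x * d.bit false x = τ * r' x)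
    {z : Bool × Bool} {c : Bool} (hz : pairTag z = some c) (x : {i // i ≠ j} → Bool) :
    d.pairWeight z x = τ * r' x := by
  rw [eq_of_pairTag_eq_some hz]
  cases c
  · rw [← hpair, pairWeight, mul_right_comm]
    rfl
  · exact hpair x

lemma sum_ite_pairTag (hpair : ∀ x, d.base x * d.bit true x * d.bit false x = τ * r' x)
    (hr' : ∑ x, r' x = 1) (c : Bool) :
    ∑ z, (if pairTag z = some c then ∑ x, d.pairWeight z x else 0) = τ := by
  have tagged (z : Bool × Bool) : (if pairTag z = some c then ∑ x, d.pairWeight z x else 0) =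
      if pairTag z = some c then τ else 0 := by
    split_ifs with hz
    · simp only [d.pairWeight_of_ne hpair hz, ← mul_sum, hr', mul_one]
    · rfl
  simp only [tagged, Fintype.sum_prod_type, Fintype.sum_bool]
  cases c <;> simp [pairTag]

lemma base_mul_mark_true_mul_bit_false (x : {i // i ≠ j} → Bool) :
    d.base x * d.mark true x * d.bit false x = (Pi.single ⊤ 1 : ({i // i ≠ j} → Bool) → ℝ) x := by
  rw [← d.base_mul_single]
  obtain rfl | hx := eq_or_ne x ⊤
  · simp [mark, d.bit_false_top]
  · simp [mark, hx]

variable {κ : Type*} [Fintype κ] [DecidableEq κ]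

lemma prod_base_mul_signedBlock_mul_signedBlock
    (hpair : ∀ x, d.base x * d.bit true x * d.bit false x = τ * r' x) (hτ : τ ≠ 0)
    (t : ℝ) (z : κ → Bool × Bool) (x : κ → {i // i ≠ j} → Bool) :
    (∏ i, d.base (x i)) *
        signedBlock t (fun i ↦ d.mark (z i).1 (x i)) (fun i ↦ d.bit (z i).1 (x i)) *
        signedBlock t (fun i ↦ d.mark (z i).2 (x i)) (fun i ↦ d.bit (z i).2 (x i)) =
      τ ^ Fintype.card {i // pairTag (z i) = some true} *
          τ ^ Fintype.card {i // pairTag (z i) = some false} *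
          thinnedBlock ⊤ r' (t / τ) (fun i ↦ pairTag (z i)) (fun i ↦ d.pairWeight (z i)) x +
        t ^ 2 * markedProd (fun i ↦ d.plantedWeight (z i) (x i))
          (fun i ↦ d.pairWeight (z i) (x i)) := by
  rw [← signedBlock_mul, signedBlock_mul_signedBlock t fun i ↦ pairTag (z i)]
  · have drawn (c : Bool) (i : {i // pairTag (z i) = some c}) :
        d.base (x i) * d.bit (z i).1 (x i) * d.bit (z i).2 (x i) = τ * r' (x i) :=
      d.pairWeight_of_ne hpair i.2 (x i)
    have planted (i : {i // pairTag (z i) = some true}) :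
        d.base (x i) * d.mark (z i).1 (x i) * d.bit (z i).2 (x i) =
          (Pi.single ⊤ 1 : ({i // i ≠ j} → Bool) → ℝ) (x i) := by
      rw [eq_of_pairTag_eq_some i.2]
      exact d.base_mul_mark_true_mul_bit_false (x i)
    have planted' (i : {i // pairTag (z i) = some false}) :
        d.base (x i) * d.bit (z i).1 (x i) * d.mark (z i).2 (x i) =
          (Pi.single ⊤ 1 : ({i // i ≠ j} → Bool) → ℝ) (x i) := by
      rw [eq_of_pairTag_eq_some i.2, mul_right_comm]
      exact d.base_mul_mark_true_mul_bit_false (x i)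
    simp only [drawn, planted, planted', signedBlock_const_mul t hτ, thinnedBlock, plantedBlock,
      pairWeight, plantedWeight]
    ring
  · intro i hi
    rw [eq_of_pairTag_eq_some hi]
    rfl
  · intro i hi
    rw [eq_of_pairTag_eq_some hi]
    exact mul_zero _
  · intro i hi
    rw [fst_eq_snd_of_pairTag_eq_none hi, mul_assoc, d.mark_mul_bit, mul_zero]
  · intro i hi
    rw [fst_eq_snd_of_pairTag_eq_none hi, mul_assoc, mul_comm (d.bit _ _), d.mark_mul_bit, mul_zero]

/-- The bound for two copies `z` of the `j`-th column of a block, summed over the rest of the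
block. -/
noncomputable def pairBound (τ C t : ℝ) (z : κ → Bool × Bool) : ℝ :=
  τ ^ Fintype.card {i // pairTag (z i) = some true} *
      τ ^ Fintype.card {i // pairTag (z i) = some false} *
      thinnedBlockBound C (t / τ) (fun i ↦ pairTag (z i)) (fun i ↦ d.pairWeight (z i)) +
    ∑ x : κ → {i // i ≠ j} → Bool, t ^ 2 * markedProd (fun i ↦ d.plantedWeight (z i) (x i))
      (fun i ↦ d.pairWeight (z i) (x i))

lemma sq_mul_markedProd_nonneg (t : ℝ) (z : κ → Bool × Bool) (x : κ → {i // i ≠ j} → Bool) :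
    0 ≤ t ^ 2 * markedProd (fun i ↦ d.plantedWeight (z i) (x i))
      (fun i ↦ d.pairWeight (z i) (x i)) :=
  mul_nonneg (sq_nonneg t) <| markedProd_nonneg (fun _ ↦ d.plantedWeight_nonneg _ _)
    fun _ ↦ d.pairWeight_nonneg _ _

lemma pairBound_nonneg (hτ : 0 < τ) (C : ℝ) {t : ℝ} (ht : 0 ≤ t) (z : κ → Bool × Bool) :
    0 ≤ d.pairBound τ C t z :=
  add_nonneg
    (mul_nonneg (by positivity) (thinnedBlockBound_nonneg C (div_nonneg ht hτ.le) _
      fun _ ↦ d.pairWeight_nonneg _))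
    (sum_nonneg fun x _ ↦ d.sq_mul_markedProd_nonneg t z x)

lemma pairBound_eq (hpair : ∀ x, d.base x * d.bit true x * d.bit false x = τ * r' x)
    (hr' : ∑ x, r' x = 1) (C t : ℝ) (z : κ → Bool × Bool) :
    d.pairBound τ C t z =
      (∏ i, ∑ x, d.pairWeight (z i) x) *
          (blockBound C (Fintype.card {i // pairTag (z i) = some true}) (t / τ) *
            blockBound C (Fintype.card {i // pairTag (z i) = some false}) (t / τ)) +
        t ^ 2 * markedProd (fun i ↦ ∑ x, d.plantedWeight (z i) x)
          (fun i ↦ ∑ x, d.pairWeight (z i) x) := by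
  have tagged (c : Bool) : ∏ i : {i // pairTag (z i) = some c}, ∑ x, d.pairWeight (z i) x =
      τ ^ Fintype.card {i // pairTag (z i) = some c} := by
    have sum_eq (i : {i // pairTag (z i) = some c}) : ∑ x, d.pairWeight (z i) x = τ := by
      simp only [d.pairWeight_of_ne hpair i.2, ← mul_sum, hr', mul_one]
    simp only [sum_eq, prod_const, card_univ]
  rw [pairBound, ← mul_sum, sum_markedProd (fun i ↦ d.plantedWeight (z i))
      (fun i ↦ d.pairWeight (z i)), thinnedBlockBound,
    ← Fintype.prod_fiberwise (fun i ↦ pairTag (z i)) fun i ↦ ∑ x, d.pairWeight (z i) x,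
    Fintype.prod_option, Fintype.prod_bool, tagged, tagged]
  ring

lemma sum_pairBound_le (hpair : ∀ x, d.base x * d.bit true x * d.bit false x = τ * r' x)
    (hr' : ∑ x, r' x = 1) (hτ : 0 < τ) {C s t : ℝ} (hC : 0 ≤ C) (hs : 0 < s) (ht : 0 ≤ t) :
    ∑ z : κ → Bool × Bool, d.pairBound τ C t z ≤
      blockBound (N + thinnedConst C τ s) (Fintype.card κ) t ^ 2 := by
  simp only [d.pairBound_eq hpair hr']
  exact sum_thinned_mul_add_markedProd_le
    (fun z ↦ sum_nonneg fun x _ ↦ d.pairWeight_nonneg z x) d.sum_pairWeight hτ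
    (d.sum_ite_pairTag hpair hr' true) (d.sum_ite_pairTag hpair hr' false) d.index_nonneg
    d.sum_plantedWeight hC hs ht

end ColumnSplit

variable {μ : Type} [Fintype μ] [DecidableEq μ] {κ : μ → Type} [∀ b, Fintype (κ b)]
  [∀ b, DecidableEq (κ b)] {S : Finset K} {j : K} {r : (K → Bool) → ℝ} {N : ℝ}
  (d : ColumnSplit j r N) {r' : ({i // i ≠ j} → Bool) → ℝ} {τ C : ℝ}

/-- The signed density of the `j`-th columns `y` given the remaining columns `x`. -/
noncomputable def ColumnSplit.columnBlock (t : μ → ℝ) (y : ∀ b, κ b → Bool)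
    (x : ∀ b, κ b → {i // i ≠ j} → Bool) : ℝ :=
  ∏ b, signedBlock (t b) (fun i ↦ d.mark (y b i) (x b i)) (fun i ↦ d.bit (y b i) (x b i))

lemma ColumnSplit.sum_sq_le
    (hpair : ∀ x, d.base x * d.bit true x * d.bit false x = τ * r' x) (hr' : ∑ x, r' x = 1)
    (hτ : 0 < τ) (h : TensorBound (S.subtype (· ≠ j)) r' C) (hC : 0 ≤ C) {s : ℝ} (hs : 0 < s)
    {t : μ → ℝ} (ht : ∀ b, 0 ≤ t b)
    {ψ : (∀ b, κ b → Bool) → (∀ b, κ b → {i // i ≠ j} → Bool) → ℝ}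
    (hψ : ∀ y, IsBoundedCylinder (S.subtype (· ≠ j)) (ψ y)) :
    ∑ x, (∏ b, ∏ i, d.base (x b i)) * (∑ y, d.columnBlock t y x * ψ y x) ^ 2 ≤
      ∏ b, blockBound (N + thinnedConst C τ s) (Fintype.card (κ b)) (t b) ^ 2 := by
  calc ∑ x, (∏ b, ∏ i, d.base (x b i)) * (∑ y, d.columnBlock t y x * ψ y x) ^ 2
      = ∑ z : ∀ b, κ b → Bool × Bool, ∑ x,
          (∏ b, (∏ i, d.base (x b i)) *
            signedBlock (t b) (fun i ↦ d.mark (z b i).1 (x b i)) (fun i ↦ d.bit (z b i).1 (x b i)) *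
            signedBlock (t b) (fun i ↦ d.mark (z b i).2 (x b i))
              (fun i ↦ d.bit (z b i).2 (x b i))) *
          (ψ (fun b i ↦ (z b i).1) x * ψ (fun b i ↦ (z b i).2) x) := by
        rw [sum_rows_prod]
        simp only [sq (∑ _, _), sum_mul_sum]
        simp only [mul_sum]
        rw [sum_comm]
        refine sum_congr rfl fun y _ ↦ sum_comm.trans ?_
        refine sum_congr rfl fun y' _ ↦ sum_congr rfl fun x _ ↦ ?_
        simp only [columnBlock, prod_mul_distrib]
        ring
    _ ≤ ∑ z : ∀ b, κ b → Bool × Bool, ∏ b, d.pairBound τ C (t b) (z b) := by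
        refine sum_le_sum fun z _ ↦ (le_abs_self _).trans ?_
        simp only [d.prod_base_mul_signedBlock_mul_signedBlock hpair hτ.ne']
        exact h.abs_sum_thinnedBlock_add_mul_le (fun b i ↦ pairTag (z b i))
          (fun b i ↦ d.pairWeight_nonneg (z b i)) (fun b ↦ div_nonneg (ht b) hτ.le)
          (fun b ↦ by positivity) (fun b ↦ d.sq_mul_markedProd_nonneg (t b) (z b))
          ((hψ _).mul (hψ _))
    _ = ∏ b, ∑ z, d.pairBound τ C (t b) z := by
        rw [Fintype.prod_sum fun b (z : κ b → Bool × Bool) ↦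
          d.pairBound τ C (t b) z]
    _ ≤ ∏ b, blockBound (N + thinnedConst C τ s) (Fintype.card (κ b)) (t b) ^ 2 := by
        refine prod_le_prod (fun b _ ↦ sum_nonneg fun z _ ↦ d.pairBound_nonneg hτ C (ht b) z)
          fun b _ ↦ d.sum_pairBound_le hpair hr' hτ hC hs (ht b)

lemma sq_sum_mul_le_sum_mul_sq {ι : Type*} [Fintype ι] {w : ι → ℝ} (hw : ∀ i, 0 ≤ w i)
    (hw_sum : ∑ i, w i = 1) {φ : ι → ℝ} (hφ : ∀ i, |φ i| ≤ 1) (F : ι → ℝ) :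
    (∑ i, w i * (φ i * F i)) ^ 2 ≤ ∑ i, w i * F i ^ 2 := by
  refine (Real.pow_arith_mean_le_arith_mean_pow_of_even univ w _ (fun i _ ↦ hw i) hw_sum
    even_two).trans (sum_le_sum fun i _ ↦ mul_le_mul_of_nonneg_left ?_ (hw i))
  rw [mul_pow, ← sq_abs]
  exact mul_le_of_le_one_left (sq_nonneg _) (pow_le_one₀ (abs_nonneg _) (hφ i))

lemma ColumnSplit.tensorBound_of_mem (d : ColumnSplit j r N) (hj : j ∈ S)
    (hpair : ∀ x, d.base x * d.bit true x * d.bit false x = τ * r' x) (hr' : ∑ x, r' x = 1)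
    (hτ : 0 < τ) (h : TensorBound (S.subtype (· ≠ j)) r' C) (hC : 0 ≤ C) {s : ℝ} (hs : 0 < s) :
    TensorBound S r (N + thinnedConst C τ s) := by
  intro μ _ _ κ _ _ t χ ht hχ
  obtain ⟨φ, ψ, abs_φ_le, hψ, χ_eq⟩ := hχ.exists_insertColumn_eq_mul hj
  have base_sum : ∑ x : ∀ b, κ b → {i // i ≠ j} → Bool, ∏ b, ∏ i, d.base (x b i) = 1 := by
    rw [← Fintype.prod_sum fun b (x : κ b → {i // i ≠ j} → Bool) ↦ ∏ i, d.base (x i)]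
    exact prod_eq_one fun b _ ↦ sum_prod_eq_one d.sum_base
  have split (x : ∀ b, κ b → {i // i ≠ j} → Bool) (y : ∀ b, κ b → Bool) :
      (∏ b, plantedBlock ⊤ r (t b) (insertColumn j x y b)) * χ (insertColumn j x y) =
        (∏ b, ∏ i, d.base (x b i)) * (φ x * (d.columnBlock t y x * ψ y x)) := by
    have blocks : ∏ b, plantedBlock ⊤ r (t b) (insertColumn j x y b) =
        (∏ b, ∏ i, d.base (x b i)) * d.columnBlock t y x := by
      rw [columnBlock, ← prod_mul_distrib]
      exact prod_congr rfl fun b _ ↦ d.plantedBlock_insertBit (t b) (y b) (x b)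
    rw [blocks, χ_eq]
    ring
  refine abs_le_of_sq_le_sq ?_ (prod_nonneg fun b _ ↦ blockBound_nonneg _ _ (ht b))
  rw [sum_insertColumn j]
  simp only [split, ← mul_sum, ← prod_pow]
  exact (sq_sum_mul_le_sum_mul_sq (fun x ↦ prod_nonneg fun b _ ↦ prod_nonneg fun i _ ↦
    d.base_nonneg _) base_sum abs_φ_le _).trans (d.sum_sq_le hpair hr' hτ h hC hs ht hψ)

end CauchySchwarz

section UniformRows

variable {K : Type*} [Fintype K] [DecidableEq K]

/-- The disintegration of the row distribution `r` along column `j`. Where `base` vanishes, so does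
`bit`, by the convention for division by zero. -/
noncomputable def ColumnSplit.ofLaw {j : K} {r : (K → Bool) → ℝ} {N : ℝ} (r_nonneg : ∀ u, 0 ≤ r u)
    (r_sum : ∑ u, r u = 1) (r_top : r ⊤ = 0) (r_insertBit_false : r (insertBit j false ⊤) * N = 1) :
    ColumnSplit j r N where
  base x := ∑ y, r (insertBit j y x)
  bit y x := r (insertBit j y x) / ∑ y, r (insertBit j y x)
  base_nonneg x := sum_nonneg fun y _ ↦ r_nonneg _
  bit_nonneg y x := div_nonneg (r_nonneg _) (sum_nonneg fun y _ ↦ r_nonneg _)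
  sum_base := by
    rw [← r_sum, ← (Equiv.funSplitAt j Bool).symm.sum_comp, Fintype.sum_prod_type_right]
    rfl
  base_mul_sum_bit x := by rw [← sum_div, ← mul_div_assoc, mul_self_div_self]
  law_eq y x := by
    refine (mul_div_cancel_of_imp' fun base_eq_zero ↦ ?_).symm
    exact (sum_eq_zero_iff_of_nonneg fun y _ ↦ r_nonneg _).mp base_eq_zero y (mem_univ y)
  base_top_mul := by
    rw [Fintype.sum_bool, insertBit_eq_top_iff.mpr ⟨rfl, rfl⟩, r_top, zero_add, r_insertBit_false]
  bit_true_top := by rw [insertBit_eq_top_iff.mpr ⟨rfl, rfl⟩, r_top, zero_div]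
  bit_false_top := by
    rw [Fintype.sum_bool, insertBit_eq_top_iff.mpr ⟨rfl, rfl⟩, r_top, zero_add]
    exact div_self (left_ne_zero_of_mul_eq_one r_insertBit_false)

/-- The uniform distribution on `U`. -/
noncomputable def uniformWeight {α : Type*} [DecidableEq α] (U : Finset α) (a : α) : ℝ :=
  if a ∈ U then 1 / #U else 0

lemma uniformWeight_nonneg {α : Type*} [DecidableEq α] (U : Finset α) (a : α) :
    0 ≤ uniformWeight U a := by
  unfold uniformWeight
  positivity

lemma sum_uniformWeight {α : Type*} [Fintype α] [DecidableEq α] {U : Finset α} (hU : U.Nonempty) :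
    ∑ a, uniformWeight U a = 1 := by
  have : (#U : ℝ) ≠ 0 := Nat.cast_ne_zero.mpr hU.card_ne_zero
  simp [uniformWeight, this]

end UniformRows

section PuncturedCubes

variable {K : Type*}

/-- `U` omits the all-ones row but contains every other row with ones outside the columns `S`. -/
def ContainsPuncturedCube (S : Finset K) (U : Finset (K → Bool)) : Prop :=
  ⊤ ∉ U ∧ ∀ u, u ≠ ⊤ → (∀ i ∉ S, u i = true) → u ∈ U

/-- The rows with column `j` removed whose two extensions lie in `U`. -/
def bothExtensions [Fintype K] [DecidableEq K] (j : K) (U : Finset (K → Bool)) :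
    Finset ({i // i ≠ j} → Bool) :=
  {x | insertBit j true x ∈ U ∧ insertBit j false x ∈ U}

namespace ContainsPuncturedCube

variable {S : Finset K} {U : Finset (K → Bool)}

lemma two_pow_le_card_add_one (h : ContainsPuncturedCube S U) : 2 ^ #S ≤ #U + 1 := by
  classical
  have rows_mem : ∀ T ∈ S.powerset.erase ∅, (fun i ↦ decide (i ∉ T)) ∈ U := by
    intro T hT
    obtain ⟨T_ne, hTS⟩ := mem_erase.mp hT
    obtain ⟨i, hi⟩ := nonempty_iff_ne_empty.mpr T_ne
    refine h.2 _ (fun h_top ↦ ?_) fun i hi ↦ decide_eq_true fun hiT ↦ hi (mem_powerset.mp hTS hiT)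
    simpa [hi] using congrFun h_top i
  have := card_le_card_of_injOn _ rows_mem fun T _ T' _ hTT' ↦ by
    ext i
    simpa using congrFun hTT' i
  rw [card_erase_of_mem (empty_mem_powerset S), card_powerset] at this
  omega

lemma card_pos (h : ContainsPuncturedCube S U) (hS : S.Nonempty) : 0 < #U := by
  have := Nat.one_lt_two_pow hS.card_ne_zero
  have := h.two_pow_le_card_add_one
  omega

variable [DecidableEq K] {j : K}

lemma insertBit_mem (h : ContainsPuncturedCube S U) (hj : j ∈ S) {y : Bool}
    {x : {i // i ≠ j} → Bool} (hx : ∀ i ∉ S.subtype (· ≠ j), x i = true)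
    (hyx : ¬(y = true ∧ x = ⊤)) : insertBit j y x ∈ U := by
  refine h.2 _ (mt insertBit_eq_top_iff.mp hyx) fun i hi ↦ ?_
  have hij : i ≠ j := fun hij ↦ hi (hij ▸ hj)
  rw [insertBit_of_ne hij]
  exact hx _ (mt mem_subtype.mp hi)

variable [Fintype K]

/-- The disintegration along `j ∈ S` of the uniform distribution on `U`. -/
noncomputable def columnSplit (h : ContainsPuncturedCube S U) (hj : j ∈ S) :
    ColumnSplit j (uniformWeight U) #U :=
  .ofLaw (uniformWeight_nonneg U) (sum_uniformWeight (Finset.card_pos.mp (h.card_pos ⟨j, hj⟩)))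
    (if_neg h.1) <| by
      rw [uniformWeight, if_pos (h.insertBit_mem (x := ⊤) hj (fun _ _ ↦ rfl) (by simp))]
      exact one_div_mul_cancel (Nat.cast_ne_zero.mpr (h.card_pos ⟨j, hj⟩).ne')

lemma bothExtensions_containsPuncturedCube (h : ContainsPuncturedCube S U) (hj : j ∈ S) :
    ContainsPuncturedCube (S.subtype (· ≠ j)) (bothExtensions j U) := by
  simp only [ContainsPuncturedCube, bothExtensions, mem_filter_univ]
  refine ⟨fun hU ↦ h.1 ?_, fun x hx_top hx ↦ ⟨?_, ?_⟩⟩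
  · rw [← insertBit_eq_top_iff.mpr ⟨rfl, rfl⟩]
    exact hU.1
  all_goals exact h.insertBit_mem hj hx fun hyx ↦ hx_top hyx.2

lemma columnSplit_pair (h : ContainsPuncturedCube S U) (hj : j ∈ S) (x : {i // i ≠ j} → Bool) :
    (h.columnSplit hj).base x * (h.columnSplit hj).bit true x * (h.columnSplit hj).bit false x =
      #(bothExtensions j U) / (2 * #U) * uniformWeight (bothExtensions j U) x := by
  simp only [columnSplit, ColumnSplit.ofLaw, Fintype.sum_bool, uniformWeight]
  by_cases hx : x ∈ bothExtensions j U
  · have card_ne : (#(bothExtensions j U) : ℝ) ≠ 0 := Nat.cast_ne_zero.mpr (card_ne_zero_of_mem hx)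
    have card_U_ne : (#U : ℝ) ≠ 0 := Nat.cast_ne_zero.mpr (h.card_pos ⟨j, hj⟩).ne'
    simp only [if_pos hx]
    rw [bothExtensions, mem_filter_univ] at hx
    simp only [if_pos hx.1, if_pos hx.2]
    field_simp
    ring
  · simp only [if_neg hx]
    rw [bothExtensions, mem_filter_univ, not_and_or] at hx
    rcases hx with hx | hx <;> simp [if_neg hx]

end ContainsPuncturedCube

end PuncturedCubes

section Induction

/-- The variance constant for `#S` with `2 ^ #S - 1 = M` and row distributions uniform on `N` rows,
the closed form that is reproduced by the induction on `#S`. -/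
noncomputable def columnConst (M N : ℝ) : ℝ :=
  2 * M * (N * (4 * M - 1) / (2 * M + 1) - 1)

lemma sub_one_le_columnConst_one {N : ℝ} (hN : 1 ≤ N) : N - 1 ≤ columnConst 1 N := by
  unfold columnConst
  linarith

lemma columnConst_nonneg {M N : ℝ} (hM : 1 ≤ M) (hN : M ≤ N) : 0 ≤ columnConst M N := by
  refine mul_nonneg (by positivity) (sub_nonneg.mpr ?_)
  rw [one_le_div (by positivity)]
  nlinarith

lemma columnConst_le {M N : ℝ} (hM : 0 ≤ M) (hN : 0 ≤ N) : columnConst M N ≤ 4 * (M * N) := by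
  have : N * (4 * M - 1) / (2 * M + 1) ≤ 2 * N := by
    rw [div_le_iff₀ (by positivity)]
    linarith
  unfold columnConst
  nlinarith

lemma add_thinnedConst_columnConst_le {M N N' : ℝ} (hM : 1 ≤ M) (hN : 2 * M + 1 ≤ N)
    (hN' : 0 < N') :
    N + thinnedConst (columnConst M N') (N' / (2 * N)) (1 / (2 * M)) ≤
      columnConst (2 * M + 1) N := by
  have : 0 < M := by linarith
  have N_pos : 0 < N := by linarith
  have thinned : thinnedConst (columnConst M N') (N' / (2 * N)) (1 / (2 * M)) =
      2 * N * (4 * M - 1) := by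
    unfold thinnedConst columnConst
    field_simp
    ring
  have target : N * (8 * M - 1) ≤ columnConst (2 * M + 1) N := by
    have growth : N * (8 * M - 1) / (2 * (2 * M + 1)) ≤
        N * (4 * (2 * M + 1) - 1) / (2 * (2 * M + 1) + 1) - 1 := by
      rw [div_sub_one (by positivity), div_le_div_iff₀ (by positivity) (by positivity)]
      have := mul_le_mul_of_nonneg_right hN (by positivity : 0 ≤ 8 * M + 9)
      linarith
    unfold columnConst
    rwa [div_le_iff₀' (by positivity)] at growth
  rw [thinned]
  linarith

lemma tensorBound_uniformWeight (n : ℕ) {K : Type*} [Fintype K] [DecidableEq K] {S : Finset K}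
    (hS : #S = n + 1) {U : Finset (K → Bool)} (hU : ContainsPuncturedCube S U) :
    TensorBound S (uniformWeight U) (columnConst (2 ^ (n + 1) - 1) #U) := by
  induction n generalizing K with
  | zero =>
    obtain ⟨j, rfl⟩ := card_eq_one.mp hS
    refine (hU.columnSplit (mem_singleton_self j)).tensorBound_singleton.mono ?_
    have := sub_one_le_columnConst_one (N := #U)
      (Nat.one_le_cast.mpr (hU.card_pos (singleton_nonempty j)))
    norm_num at this ⊢
    exact this
  | succ n ih =>
    obtain ⟨j, hj⟩ : S.Nonempty := card_pos.mp (by omega)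
    have hS' : #(S.subtype (· ≠ j)) = n + 1 := by
      rw [card_subtype, filter_ne', card_erase_of_mem hj, hS, Nat.add_sub_cancel]
    have hU' := hU.bothExtensions_containsPuncturedCube hj
    have nonempty' : (bothExtensions j U).Nonempty :=
      card_pos.mp (hU'.card_pos (card_pos.mp (by omega)))
    have card_pos' : (0 : ℝ) < #(bothExtensions j U) := Nat.cast_pos.mpr nonempty'.card_pos
    have card_U_pos : (0 : ℝ) < #U := Nat.cast_pos.mpr (hU.card_pos ⟨j, hj⟩)
    have two_pow_le : (2 : ℝ) ^ (n + 1 + 1) ≤ #U + 1 := by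
      exact_mod_cast hS ▸ hU.two_pow_le_card_add_one
    have two_pow_le' : (2 : ℝ) ^ (n + 1) ≤ #(bothExtensions j U) + 1 := by
      exact_mod_cast hS' ▸ hU'.two_pow_le_card_add_one
    have two_le : (2 : ℝ) ≤ 2 ^ (n + 1) := le_self_pow₀ one_le_two n.succ_ne_zero
    set M : ℝ := 2 ^ (n + 1) - 1 with hM
    have M_succ : (2 : ℝ) ^ (n + 1 + 1) - 1 = 2 * M + 1 := by rw [hM]; ring
    have one_le : 1 ≤ M := by linarith
    rw [M_succ]
    refine ((hU.columnSplit hj).tensorBound_of_mem hj (hU.columnSplit_pair hj)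
      (sum_uniformWeight nonempty') (by positivity) (ih hS' hU')
      (columnConst_nonneg one_le (by linarith)) (s := 1 / (2 * M)) (by positivity)).mono ?_
    exact add_thinnedConst_columnConst_le one_le (by linarith) card_pos'

end Induction

section UpperLayers

/-- The rows of Hamming weight between `k - ℓ` and `k - 1`. -/
def upperLayers (k ℓ : ℕ) : Finset (Fin k → Bool) :=
  {u | k - ℓ ≤ wt u ∧ wt u ≤ k - 1}

lemma rowWtL_eq_uniformWeight (k ℓ : ℕ) : rowWtL k ℓ = uniformWeight (upperLayers k ℓ) := by
  funext u
  simp only [rowWtL, uniformWeight, upperLayers, mem_filter_univ]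

lemma wt_add_card_false {k : ℕ} (u : Fin k → Bool) : wt u + #{j | u j = false} = k := by
  simpa [wt] using card_filter_add_card_filter_not (s := univ) fun j ↦ u j = true

lemma upperLayers_containsPuncturedCube {k ℓ : ℕ} (hk : 1 ≤ k) {S : Finset (Fin k)}
    (hS : #S ≤ ℓ) : ContainsPuncturedCube S (upperLayers k ℓ) := by
  simp only [ContainsPuncturedCube, upperLayers, mem_filter_univ]
  refine ⟨fun h ↦ ?_, fun u hu h_ones ↦ ?_⟩
  · have : wt (⊤ : Fin k → Bool) = k := by simp [wt]
    omega
  · have zeros_subset : ({j | u j = false} : Finset (Fin k)) ⊆ S := by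
      intro j hj
      by_contra hjS
      simp [h_ones j hjS] at hj
    have zeros_nonempty : ({j | u j = false} : Finset (Fin k)).Nonempty := by
      obtain ⟨j, hj⟩ := Function.ne_iff.mp hu
      exact ⟨j, by simpa using hj⟩
    have := wt_add_card_false u
    have := card_le_card zeros_subset
    have := zeros_nonempty.card_pos
    omega

lemma card_upperLayers_le {k ℓ : ℕ} (hk : 1 ≤ k) (hℓk : ℓ ≤ k) :
    #(upperLayers k ℓ) ≤ ∑ i ∈ Icc 1 ℓ, k.choose i := by
  calc #(upperLayers k ℓ)
      ≤ #((Icc 1 ℓ).biUnion fun i ↦ powersetCard i (univ : Finset (Fin k))) := by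
        refine card_le_card_of_injOn (fun u ↦ ({j | u j = false} : Finset (Fin k)))
          (fun u hu ↦ ?_) fun u _ v _ huv ↦ ?_
        · have := wt_add_card_false u
          simp only [upperLayers, mem_coe, mem_filter_univ] at hu
          simp only [coe_biUnion, Set.mem_iUnion, mem_coe, mem_powersetCard_univ, mem_Icc]
          exact ⟨_, by omega, rfl⟩
        · funext j
          have := Finset.ext_iff.mp huv j
          simp only [mem_filter_univ] at this
          grind
    _ ≤ ∑ i ∈ Icc 1 ℓ, #(powersetCard i (univ : Finset (Fin k))) := card_biUnion_le
    _ = ∑ i ∈ Icc 1 ℓ, k.choose i := by simp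

end UpperLayers

section Disjointness

variable {n k ℓ : ℕ} {X : Fin n → Fin k → Bool}

lemma plantedBlock_one_div_eq_sigma1L_sub_sigma0L :
    plantedBlock ⊤ (rowWtL k ℓ) (1 / n) X = sigma1L n k ℓ X - sigma0L n k ℓ X := by
  have all_ones (i : Fin n) : X i = ⊤ ↔ ∀ j, X i j = true := funext_iff
  simp only [plantedBlock, signedBlock, markedProd_eq_sum_mul_prod_erase, sigma1L, sigma0L,
    Pi.single_apply, all_ones, ite_mul, one_mul, zero_mul]

lemma sigma0L_eq_zero (hk : 1 ≤ k) (h : DISJ n k X = false) : sigma0L n k ℓ X = 0 := by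
  simp only [DISJ, decide_eq_false_iff_not, not_forall, not_exists, Bool.not_eq_false] at h
  obtain ⟨i, hi⟩ := h
  refine prod_eq_zero (mem_univ i) (if_neg ?_)
  have : wt (X i) = k := by simp [wt, hi]
  omega

lemma sigma1L_eq_zero (h : DISJ n k X = true) : sigma1L n k ℓ X = 0 := by
  simp only [DISJ, decide_eq_true_eq] at h
  refine mul_eq_zero_of_right _ (sum_eq_zero fun i _ ↦ if_neg fun h_top ↦ ?_)
  obtain ⟨j, hj⟩ := h i
  simp [h_top j] at hj

lemma sign_DISJ_mul_sigmaL (hk : 1 ≤ k) :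
    (if DISJ n k X then -1 else 1) * sigmaL n k ℓ X =
      1 / 2 * plantedBlock ⊤ (rowWtL k ℓ) (1 / n) X := by
  rw [plantedBlock_one_div_eq_sigma1L_sub_sigma0L, sigmaL]
  cases h : DISJ n k X
  · rw [if_neg Bool.false_ne_true, sigma0L_eq_zero hk h]
    ring
  · rw [if_pos rfl, sigma1L_eq_zero h]
    ring

lemma sign_xor_eq_prod_sign {ι : Type*} [Fintype ι] (p : ι → Bool) :
    (if decide (#{i | p i = true} % 2 = 1) then (-1 : ℝ) else 1) =
      ∏ i, if p i then (-1 : ℝ) else 1 := by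
  rw [prod_ite, prod_const, prod_const_one, mul_one]
  rcases Nat.even_or_odd #{i | p i = true} with even | odd
  · rw [even.neg_one_pow, Nat.even_iff.mp even, if_neg (by decide)]
  · rw [odd.neg_one_pow, Nat.odd_iff.mp odd, if_pos (by decide)]

lemma sign_xor_mul_prod_sigmaL (hk : 1 ≤ k) {ι : Type*} [Fintype ι] {nn : ι → ℕ}
    (X : ∀ i, Fin (nn i) → Fin k → Bool) :
    (if decide (#{i | DISJ (nn i) k (X i) = true} % 2 = 1) then (-1 : ℝ) else 1) *
        ∏ i, sigmaL (nn i) k ℓ (X i) =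
      ∏ i, 1 / 2 * plantedBlock ⊤ (rowWtL k ℓ) (1 / nn i) (X i) := by
  simp only [sign_xor_eq_prod_sign, ← prod_mul_distrib, sign_DISJ_mul_sigmaL hk]

end Disjointness

section FinalBound

lemma half_mul_blockBound_one_div (D : ℝ) {n : ℝ} (hn : 0 < n) :
    1 / 2 * blockBound (4 * D) n (1 / n) = √(D / n) := by
  have factor : 4 * D * n = (2 * n) ^ 2 * (D / n) := by
    field_simp
    ring
  rw [blockBound, one_div_mul_cancel hn.ne', sub_self, abs_zero, add_zero, factor,
    Real.sqrt_mul (by positivity), Real.sqrt_sq (by positivity)]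
  field_simp

lemma prod_sqrt_mul_div {ι : Type*} [Fintype ι] {a b : ℝ} (ha : 0 ≤ a) (hb : 0 ≤ b) {n : ι → ℝ}
    (hn : ∀ i, 0 ≤ n i) :
    ∏ i, √(a * b / n i) =
      a ^ ((Fintype.card ι : ℝ) / 2) * b ^ ((Fintype.card ι : ℝ) / 2) / √(∏ i, n i) := by
  rw [← Real.mul_rpow ha hb, Real.sqrt_prod _ fun i _ ↦ hn i]
  simp only [Real.sqrt_div' _ (hn _), prod_div_distrib, prod_const, card_univ]
  rw [Real.rpow_div_two_eq_sqrt _ (mul_nonneg ha hb), Real.rpow_natCast]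

lemma abs_sum_prod_half_plantedBlock_mul_le {K : Type*} [Fintype K] [DecidableEq K] {S : Finset K}
    {r : (K → Bool) → ℝ} {D : ℝ} (h : TensorBound S r (4 * D)) {m : ℕ} {nn : Fin m → ℕ}
    (hnn : ∀ i, 1 ≤ nn i) {χ : (∀ i, Fin (nn i) → K → Bool) → ℝ} (hχ : IsBoundedCylinder S χ) :
    |∑ X : ∀ i, Fin (nn i) → K → Bool, (∏ i, 1 / 2 * plantedBlock ⊤ r (1 / nn i) (X i)) * χ X| ≤
      ∏ i, √(D / nn i) := by
  have bound := h (Fin m) (fun i ↦ Fin (nn i)) (fun i ↦ 1 / nn i) χ (fun i ↦ by positivity) hχ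
  simp only [Fintype.card_fin] at bound
  simp only [prod_mul_distrib, mul_assoc, ← mul_sum, abs_mul]
  rw [abs_of_pos (prod_pos fun _ _ ↦ one_half_pos)]
  refine (mul_le_mul_of_nonneg_left bound (prod_nonneg fun _ _ ↦ one_half_pos.le)).trans_eq ?_
  rw [← prod_mul_distrib]
  exact prod_congr rfl fun i _ ↦ half_mul_blockBound_one_div D (Nat.cast_pos.mpr (hnn i))

lemma tensorBound_rowWtL {k ℓ : ℕ} (hℓ : 1 ≤ ℓ) (hℓk : ℓ ≤ k) {S : Finset (Fin k)}
    (hS : #S = ℓ) :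
    TensorBound S (rowWtL k ℓ) (4 * ((2 ^ ℓ - 1) * ∑ i ∈ Icc 1 ℓ, (k.choose i : ℝ))) := by
  obtain ⟨n, rfl⟩ := Nat.exists_eq_add_of_le' hℓ
  have layers := upperLayers_containsPuncturedCube (hℓ.trans hℓk) hS.le
  have two_pow : (1 : ℝ) ≤ 2 ^ (n + 1) := one_le_pow₀ one_le_two
  have card_le : (#(upperLayers k (n + 1)) : ℝ) ≤ ∑ i ∈ Icc 1 (n + 1), (k.choose i : ℝ) := by
    exact_mod_cast card_upperLayers_le (hℓ.trans hℓk) hℓk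
  rw [rowWtL_eq_uniformWeight]
  refine (tensorBound_uniformWeight n hS layers).mono
    ((columnConst_le (by linarith) (Nat.cast_nonneg _)).trans ?_)
  gcongr

end FinalBound

end XorDisjointness

/-- `ℓ`-discrepancy of the XOR of `m` independent set disjointness
instances under `⊗ σ_{n_i,k,ℓ}`. -/
theorem stmt_10 (m k ℓ : ℕ) (hm : 1 ≤ m) (hℓ : 1 ≤ ℓ) (hℓk : ℓ ≤ k)
    (nn : Fin m → ℕ) (hnn : ∀ i, 1 ≤ nn i) :
    discTL nn k ℓ
      (fun X => decide
        ((Finset.univ.filter (fun i : Fin m => DISJ (nn i) k (X i) = true)).card % 2 = 1))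
      (fun X => ∏ i, sigmaL (nn i) k ℓ (X i)) ≤
      ((2 : ℝ) ^ ℓ - 1) ^ ((m : ℝ) / 2) *
        (∑ i ∈ Finset.Icc 1 ℓ, (k.choose i : ℝ)) ^ ((m : ℝ) / 2) /
          Real.sqrt (∏ i : Fin m, (nn i : ℝ)) := by
  have two_pow : (0 : ℝ) ≤ 2 ^ ℓ - 1 := sub_nonneg.mpr (one_le_pow₀ one_le_two)
  refine Real.sSup_le ?_ (by positivity)
  rintro _ ⟨S, χ, hS, hχ, rfl⟩
  obtain ⟨S', hSS', hS'⟩ := exists_superset_card_eq hS (by rwa [Fintype.card_fin])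
  simp only [XorDisjointness.sign_xor_mul_prod_sigmaL (hℓ.trans hℓk)]
  refine (XorDisjointness.abs_sum_prod_half_plantedBlock_mul_le
    (XorDisjointness.tensorBound_rowWtL hℓ hℓk hS') hnn
    ((XorDisjointness.isBoundedCylinder_of_isCylinderT hχ).mono hSS')).trans_eq ?_
  rw [XorDisjointness.prod_sqrt_mul_div two_pow (by positivity) fun i ↦ Nat.cast_nonneg _,
    Fintype.card_fin]
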